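/- arXiv:2006.01330 — 2 statements merged into one kernel-verified Lean document; each statement's English description precedes it below -/
import Mathlib

section
/- Let A be a Noetherian ring satisfying Serre's condition (S₂). Then A is strictly closed in Ā if and only if A is a weakly Arf ring and A_P is an Arf ring for every prime ideal P of A with ht P = 1. -/
open scoped TensorProduct

/-- `A` is a *weakly Arf ring*: whenever `x, y, z ∈ A` with `x` a non-zerodivisor on `A`
and the fractions `y/x` and `z/x` in the total ring of fractions `Q(A)` are integral
over `A`, then `y * z ∈ x A`. -/
def IsWeaklyArfRing (A : Type*) [CommRing A] : Prop :=
  ∀ (x y z : A) (hx : x ∈ nonZeroDivisors A),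
    IsIntegral A (IsLocalization.mk' (FractionRing A) y
      (⟨x, hx⟩ : nonZeroDivisors A)) →
    IsIntegral A (IsLocalization.mk' (FractionRing A) z
      (⟨x, hx⟩ : nonZeroDivisors A)) →
    y * z ∈ Ideal.span {x}

/-- `a` belongs to the integral closure of the ideal `I`: it satisfies an equation
`a ^ n + c 1 * a ^ (n - 1) + ⋯ + c n = 0` with `c i ∈ I ^ i`, for some `n ≥ 1`. -/
def MemIdealIntegralClosure {A : Type*} [CommRing A] (I : Ideal A) (a : A) : Prop :=
  ∃ n : ℕ, 0 < n ∧ ∃ c : ℕ → A,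
    (∀ i ∈ Finset.Icc 1 n, c i ∈ I ^ i) ∧
    a ^ n + ∑ i ∈ Finset.Icc 1 n, c i * a ^ (n - i) = 0

/-- The integral closure `Ī` of an ideal `I` of `A`, as a subset of `A`. -/
def idealIntegralClosure {A : Type*} [CommRing A] (I : Ideal A) : Set A :=
  {a | MemIdealIntegralClosure I a}

/-- An ideal `I` is integrally closed if `Ī = I`. -/
def Ideal.IsIntegrallyClosedIdeal {A : Type*} [CommRing A] (I : Ideal A) : Prop :=
  idealIntegralClosure I = (I : Set A)

/-- `A` is an *Arf ring*: (1) every integrally closed ideal of `A` containing a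
non-zerodivisor has a principal reduction, i.e. `I ^ (n + 1) = a * I ^ n` for some
`n ≥ 0` and `a ∈ I`; and (2) whenever `x, y, z ∈ A` with `x` a non-zerodivisor and
`y/x, z/x` integral over `A` in `Q(A)`, then `y * z ∈ x A`. -/
def IsArfRing (A : Type*) [CommRing A] : Prop :=
  (∀ I : Ideal A, Ideal.IsIntegrallyClosedIdeal I →
      (∃ x ∈ I, x ∈ nonZeroDivisors A) →
      ∃ (n : ℕ) (a : A), a ∈ I ∧ I ^ (n + 1) = Ideal.span {a} * I ^ n) ∧
  IsWeaklyArfRing A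

set_option synthInstance.maxHeartbeats 1000000 in
set_option maxHeartbeats 2000000 in
/-- The strict closure `A*` of `A` in the integral closure `Ā` of `A` in its total ring
of fractions `Q(A)`: the set of `x ∈ Ā` such that `x ⊗ 1 = 1 ⊗ x` in `Ā ⊗_A Ā`. -/
def strictClosureSet (A : Type*) [CommRing A] : Set (FractionRing A) :=
  {x | ∃ hx : x ∈ integralClosure A (FractionRing A),
    ((⟨x, hx⟩ : integralClosure A (FractionRing A)) ⊗ₜ[A]
        (1 : integralClosure A (FractionRing A)) :
      TensorProduct A (integralClosure A (FractionRing A))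
        (integralClosure A (FractionRing A))) =
    (1 : integralClosure A (FractionRing A)) ⊗ₜ[A]
        (⟨x, hx⟩ : integralClosure A (FractionRing A))}

/-- `A` is strictly closed in `Ā`, i.e. `A = A*`. -/
def IsStrictlyClosed (A : Type*) [CommRing A] : Prop :=
  ∀ x ∈ strictClosureSet A, ∃ a : A, algebraMap A (FractionRing A) a = x

/-- `xs` is a regular sequence on `R`: for each `i`, the element `xs i` acts injectively
on `R / (xs 0, …, xs (i-1))`. -/
def IsRegularSeq (R : Type*) [CommRing R] (xs : List R) : Prop :=
  ∀ (i : ℕ) (h : i < xs.length),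
    IsSMulRegular (R ⧸ Ideal.span {y : R | y ∈ xs.take i}) (xs.get ⟨i, h⟩)

/-- For a Noetherian local ring `R`, `depth R ≥ n` holds iff there is a regular sequence
of length `n` consisting of elements of the maximal ideal. -/
def RingDepthGE (R : Type*) [CommRing R] [IsLocalRing R] (n : ℕ) : Prop :=
  ∃ xs : List R, xs.length = n ∧ (∀ x ∈ xs, x ∈ IsLocalRing.maximalIdeal R) ∧
    IsRegularSeq R xs

/-- Serre's condition `(S_n)`: `depth A_P ≥ min (n, dim A_P)` for every prime ideal `P`
of `A`. -/
def SerreSCondition (A : Type*) [CommRing A] (n : ℕ) : Prop :=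
  ∀ (P : Ideal A) [P.IsPrime], ∀ k : ℕ, k ≤ n →
    (k : WithBot (WithTop ℕ)) ≤ ringKrullDim (Localization.AtPrime P) →
    RingDepthGE (Localization.AtPrime P) k

section
open scoped TensorProduct

theorem sc_field_step {B D : Type*} [CommRing B] [CommRing D] [Algebra B D] (n : Ideal B)
    [hn : n.IsMaximal] (x : D) (h : x ⊗ₜ[B] (1 : D) = (1 : D) ⊗ₜ[B] x) :
    ∃ r : B, x - algebraMap B D r ∈ n.map (algebraMap B D) := by
  classical
  letI : Field (B ⧸ n) := Ideal.Quotient.field n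
  set J := n.map (algebraMap B D) with hJ
  by_cases h1 : (1 : D) ∈ J
  · exact ⟨0, by rw [(Ideal.eq_top_iff_one _).2 h1]; trivial⟩
  by_contra hcon
  push Not at hcon
  letI : Algebra (B ⧸ n) (D ⧸ J) := Ideal.Quotient.algebraQuotientOfLEComap Ideal.le_comap_map
  haveI : IsScalarTower B (B ⧸ n) (D ⧸ J) := IsScalarTower.of_algebraMap_eq (fun _ => rfl)
  let q : D →ₗ[B] (D ⧸ J) := (Ideal.Quotient.mkₐ B J).toLinearMap
  have hx : q x ∉ Submodule.span (B ⧸ n) {(1 : D ⧸ J)} := by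
    intro hx
    obtain ⟨c, hc⟩ := Submodule.mem_span_singleton.1 hx
    obtain ⟨r, rfl⟩ := Ideal.Quotient.mk_surjective c
    refine hcon r (Ideal.Quotient.eq.1 ?_)
    rw [Algebra.smul_def, mul_one] at hc
    exact hc.symm
  obtain ⟨f, hf, hf0⟩ := Submodule.exists_le_ker_of_notMem hx
  have hf1 : f 1 = 0 := hf0 (Submodule.mem_span_singleton_self _)
  let F : D →ₗ[B] D →ₗ[B] (D ⧸ J) :=
    LinearMap.mk₂ B (fun u v => f (q u) • q v)
      (by intros; simp [add_smul]) (by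
        intro c m m'
        rw [map_smul, ← algebraMap_smul (B ⧸ n) c (q m), map_smul, smul_assoc, algebraMap_smul])
      (by intros; simp [smul_add]) (by
        intro c m m'
        rw [map_smul, smul_comm])
  have := congrArg (TensorProduct.lift F) h
  simp only [TensorProduct.lift.tmul, F, LinearMap.mk₂_apply] at this
  have q1 : q 1 = 1 := map_one (Ideal.Quotient.mkₐ B J)
  rw [q1, hf1, zero_smul] at this
  have h2 := smul_eq_zero.1 this
  rcases h2 with h2 | h2
  · exact hf h2
  · exact h1 (Ideal.Quotient.eq_zero_iff_mem.1 (by rw [map_one]; exact h2))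

end

section
open scoped TensorProduct
set_option linter.style.haveILetI false

theorem sc_inj {B B' T : Type*} [CommRing B] [CommRing B'] [CommRing T] [Algebra B B']
    [Algebra B' T] [Algebra B T] [IsScalarTower B B' T] (n : Ideal B) [hnm : n.IsMaximal] (b : B)
    (hb : ∀ t : T, algebraMap B T b * t = 0 → t = 0)
    (hn : ∀ r ∈ n, ∃ b' : B', algebraMap B T r = algebraMap B T b * algebraMap B' T b')
    (x : T) (hz : b • (x ⊗ₜ[B] (1:T) - (1:T) ⊗ₜ[B] x) = 0) :
    x ⊗ₜ[B'] (1:T) = (1:T) ⊗ₜ[B'] x := by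
  classical
  letI : Field (B ⧸ n) := Ideal.Quotient.field n
  set J : Ideal T := Ideal.span {algebraMap B T b} with hJ
  have hle : n ≤ J.comap (algebraMap B T) := by
    intro r hr
    obtain ⟨b', h⟩ := hn r hr
    rw [Ideal.mem_comap, h]
    exact Ideal.mul_mem_right _ _ (Ideal.mem_span_singleton_self _)
  letI : Algebra (B ⧸ n) (T ⧸ J) := Ideal.Quotient.algebraQuotientOfLEComap hle
  haveI : IsScalarTower B (B ⧸ n) (T ⧸ J) := IsScalarTower.of_algebraMap_eq (fun _ => rfl)
  obtain ⟨ι, ⟨bs⟩⟩ : ∃ ι : Set (T ⧸ J), Nonempty (Module.Basis ι (B ⧸ n) (T ⧸ J)) :=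
    ⟨_, ⟨Module.Basis.ofVectorSpace (B ⧸ n) (T ⧸ J)⟩⟩
  obtain ⟨e, he⟩ : ∃ e : _ → T, ∀ i, Ideal.Quotient.mk J (e i) = bs i :=
    ⟨fun i => (Ideal.Quotient.mk_surjective (bs i)).choose,
      fun i => (Ideal.Quotient.mk_surjective (bs i)).choose_spec⟩
  let k1 : (ι →₀ T) →ₗ[B] (T ⊗[B'] T) :=
    Finsupp.lsum B (fun i => -((TensorProduct.mk B' T T (e i)).restrictScalars B))
  let κ : (ι →₀ T) →ₗ[B] ((T ⊗[B'] T) × (ι →₀ T)) := LinearMap.prod k1 (b • LinearMap.id)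
  have hk1 : ∀ i v, k1 (Finsupp.single i v) = - (e i ⊗ₜ[B'] v) := by
    intro i v; simp [k1]
  have hκ : ∀ w, κ w = (k1 w, b • w) := fun _ => rfl
  let X := ((T ⊗[B'] T) × (ι →₀ T)) ⧸ LinearMap.range κ
  let mkX : ((T ⊗[B'] T) × (ι →₀ T)) →ₗ[B] X := (LinearMap.range κ).mkQ
  let i1 : (T ⊗[B'] T) →ₗ[B] X := mkX ∘ₗ LinearMap.inl B _ _
  let i2 : (ι →₀ T) →ₗ[B] X := mkX ∘ₗ LinearMap.inr B _ _
  have hi : ∀ p q, mkX (p, q) = i1 p + i2 q := by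
    intro p q
    simp only [i1, i2, LinearMap.comp_apply]
    rw [← map_add]; simp
  let G1 : T →ₗ[B] T →ₗ[B] X := LinearMap.mk₂ B (fun u v => i1 (u ⊗ₜ[B'] v))
    (by intro u u' v; rw [TensorProduct.add_tmul, map_add])
    (by intro c u v; rw [← map_smul, TensorProduct.smul_tmul'])
    (by intro u u' v; rw [TensorProduct.tmul_add, map_add])
    (by
      intro c u v; rw [← map_smul]
      rw [← algebraMap_smul B' c v, TensorProduct.tmul_smul, algebraMap_smul])
  let G2 : (ι →₀ B) →ₗ[B] T →ₗ[B] X := Finsupp.lsum B (fun i =>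
    LinearMap.toSpanSingleton B _ (i2 ∘ₗ Finsupp.lsingle i))
  let G : (T × (ι →₀ B)) →ₗ[B] T →ₗ[B] X := LinearMap.coprod G1 G2
  let π : (T × (ι →₀ B)) →ₗ[B] T :=
    LinearMap.coprod (b • LinearMap.id) (Finsupp.linearCombination B e)
  have hπ : Function.Surjective π := by
    intro t
    have ht : Ideal.Quotient.mk J t ∈ Submodule.span (B ⧸ n) (Set.range bs) := by
      rw [bs.span_eq]; trivial
    obtain ⟨c, hc⟩ := (Finsupp.mem_span_range_iff_exists_finsupp).1 ht
    let c' : ι →₀ B := c.mapRange (fun q => if q = 0 then 0 else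
      (Ideal.Quotient.mk_surjective q).choose) (by simp)
    have hc' : ∀ i, Ideal.Quotient.mk n (c' i) = c i := by
      intro i
      simp only [c', Finsupp.mapRange_apply]
      split_ifs with h
      · rw [h, map_zero]
      · exact (Ideal.Quotient.mk_surjective (c i)).choose_spec
    have : t - Finsupp.linearCombination B e c' ∈ J := by
      rw [← Ideal.Quotient.eq, ← hc, Finsupp.linearCombination_apply, Finsupp.sum, Finsupp.sum,
        map_sum]
      have hs : c'.support ⊆ c.support := Finsupp.support_mapRange
      symm
      rw [Finset.sum_subset hs]
      · refine Finset.sum_congr rfl fun i _ => ?_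
        rw [← he, ← hc' i, Algebra.smul_def, Algebra.smul_def, map_mul]
        rfl
      · intro i _ hi
        rw [Finsupp.notMem_support_iff.1 hi, zero_smul, map_zero]
    obtain ⟨u, hu⟩ := Ideal.mem_span_singleton'.1 this
    refine ⟨(u, c'), ?_⟩
    simp only [π, LinearMap.coprod_apply, LinearMap.smul_apply, LinearMap.id_apply]
    rw [Algebra.smul_def, mul_comm, hu]; ring
  have hker : LinearMap.ker π ≤ LinearMap.ker G := by
    rintro ⟨u, r⟩ hur
    have hur' : algebraMap B T b * u + ∑ i ∈ r.support, algebraMap B T (r i) * e i = 0 := by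
      have : b • u + Finsupp.linearCombination B e r = 0 := LinearMap.mem_ker.1 hur
      simpa only [Finsupp.linearCombination_apply, Finsupp.sum, Algebra.smul_def] using this
    have hr : ∀ i, r i ∈ n := by
      have h1 : ∑ i ∈ r.support, (Ideal.Quotient.mk n (r i)) • bs i = 0 := by
        have := congrArg (Ideal.Quotient.mk J) hur'
        rw [map_add, map_zero, map_sum, Ideal.Quotient.eq_zero_iff_mem.2
          (Ideal.mul_mem_right _ _ (Ideal.mem_span_singleton_self _)), zero_add] at this
        rw [← this]
        refine Finset.sum_congr rfl fun i _ => ?_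
        rw [← he, Algebra.smul_def, map_mul]
        rfl
      have h2 := linearIndependent_iff'.1 bs.linearIndependent _ _ h1
      intro i
      by_cases hi : i ∈ r.support
      · exact Ideal.Quotient.eq_zero_iff_mem.1 (h2 i hi)
      · rw [Finsupp.notMem_support_iff.1 hi]; exact n.zero_mem
    choose β hβ using fun i => hn (r i) (hr i)
    have hu : u = - ∑ i ∈ r.support, algebraMap B' T (β i) * e i := by
      rw [eq_neg_iff_add_eq_zero]
      apply hb
      rw [mul_add, Finset.mul_sum, ← hur']
      congr 1
      refine Finset.sum_congr rfl fun i _ => ?_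
      rw [hβ]; ring
    rw [LinearMap.mem_ker]
    ext v
    let w : ι →₀ T := ∑ i ∈ r.support, Finsupp.single i (β i • v)
    have : κ w = (u ⊗ₜ[B'] v, ∑ i ∈ r.support, Finsupp.single i (r i • v)) := by
      rw [hκ]
      refine Prod.ext ?_ ?_
      · simp only [w, map_sum, hk1, hu]
        rw [TensorProduct.neg_tmul, TensorProduct.sum_tmul, ← Finset.sum_neg_distrib]
        refine Finset.sum_congr rfl fun i _ => ?_
        rw [← Algebra.smul_def, ← TensorProduct.smul_tmul', TensorProduct.tmul_smul]
      · simp only [w, Finset.smul_sum, Finsupp.smul_single]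
        refine Finset.sum_congr rfl fun i _ => ?_
        congr 1
        rw [Algebra.smul_def, Algebra.smul_def, Algebra.smul_def, hβ, mul_assoc]
    have h2 : G (u, r) v = mkX (κ w) := by
      rw [this, hi, map_sum]
      have : G (u, r) v = G1 u v + G2 r v := rfl
      rw [this]
      congr 1
      simp only [G2, Finsupp.lsum_apply, Finsupp.sum]
      rw [LinearMap.sum_apply]
      refine Finset.sum_congr rfl fun i _ => ?_
      simp [LinearMap.toSpanSingleton_apply, ← Finsupp.smul_single]
    rw [h2]
    exact (Submodule.Quotient.mk_eq_zero _).2 ⟨w, rfl⟩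
  let H : T →ₗ[B] T →ₗ[B] X :=
    (LinearMap.ker π).liftQ G hker ∘ₗ (π.quotKerEquivOfSurjective hπ).symm.toLinearMap
  have hH : ∀ u v, H (b • u) v = i1 (u ⊗ₜ[B'] v) := by
    intro u v
    have h1 : b • u = π (u, 0) := by simp [π]
    have h2 : (π.quotKerEquivOfSurjective hπ).symm (π (u, 0)) = Submodule.Quotient.mk (u, 0) := by
      rw [LinearEquiv.symm_apply_eq]; rfl
    simp only [H, LinearMap.comp_apply, LinearEquiv.coe_coe]
    rw [h1, h2]
    simp [Submodule.liftQ_apply, G, G1]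
  have h3 := congrArg (TensorProduct.lift H) hz
  have hb1 : ∀ u v : T, b • (TensorProduct.lift H (u ⊗ₜ[B] v)) = i1 (u ⊗ₜ[B'] v) := by
    intro u v
    rw [← hH, ← map_smul, TensorProduct.smul_tmul', TensorProduct.lift.tmul]
  rw [map_zero, map_smul, map_sub, smul_sub, hb1, hb1, ← map_sub] at h3
  obtain ⟨v, hv⟩ := (Submodule.Quotient.mk_eq_zero _).1 h3
  rw [hκ] at hv
  have hv2 : b • v = 0 := congrArg Prod.snd hv
  have hv0 : v = 0 := by
    ext i
    apply hb
    rw [← Algebra.smul_def, ← Finsupp.smul_apply, hv2]; rfl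
  have hv1 := congrArg Prod.fst hv
  rw [hv0, map_zero] at hv1
  exact (sub_eq_zero.1 hv1.symm)

end

section
open scoped TensorProduct
set_option linter.style.haveILetI false

theorem ex_max_step {B D : Type*} [CommRing B] [CommRing D] [Algebra B D] [Module.Finite B D]
    (h : ¬ Function.Surjective (algebraMap B D)) :
    ∃ (n : Ideal B) (N : Submodule B D), n.IsMaximal ∧ N ≠ ⊤ ∧ (1 : D) ∈ N ∧
      ∀ y ∈ n, ∀ d : D, y • d ∈ N := by
  have h0 : (LinearMap.range (Algebra.linearMap B D)) ≠ ⊤ := by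
    intro h1
    exact h (LinearMap.range_eq_top.1 h1)
  obtain ⟨N, hN, hle⟩ := (eq_top_or_exists_le_coatom _).resolve_left h0
  haveI := isSimpleModule_iff_isCoatom.2 hN
  refine ⟨Module.annihilator B (D ⧸ N), N, IsSimpleModule.annihilator_isMaximal, hN.1,
    hle ⟨1, by simp⟩, ?_⟩
  intro y hy d
  have := (Module.mem_annihilator.1 hy) (N.mkQ d)
  rw [← map_smul, Submodule.mkQ_apply, Submodule.Quotient.mk_eq_zero] at this
  exact this

variable {R Q : Type*} [CommRing R] [CommRing Q] [Algebra R Q]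

def IntOver (I : Submodule R Q) (q : Q) : Prop :=
  ∃ n : ℕ, 0 < n ∧ ∃ c : ℕ → Q, (∀ i ∈ Finset.Icc 1 n, c i ∈ I ^ i) ∧
    q ^ n + ∑ i ∈ Finset.Icc 1 n, c i * q ^ (n - i) = 0

def ArfSub (B : Subalgebra R Q) : Prop :=
  ∀ I : Submodule R Q, I ≤ B.toSubmodule → (∀ β ∈ B, ∀ y ∈ I, β * y ∈ I) → (∃ u : Qˣ, (u : Q) ∈ I) →
    (∀ q ∈ B, IntOver I q → q ∈ I) →
    ∃ b : Qˣ, (b : Q) ∈ I ∧ ∀ y ∈ I, ∀ z ∈ I, ∃ t ∈ I, y * z = b * t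

def SCx (B D : Subalgebra R Q) (x : Q) : Prop :=
  ∃ (h : B ≤ D) (hx : x ∈ D), letI := (Subalgebra.inclusion h).toRingHom.toAlgebra
    (⟨x, hx⟩ : D) ⊗ₜ[B] (1 : D) = (1 : D) ⊗ₜ[B] (⟨x, hx⟩ : D)

theorem SCx.mono {B D D' : Subalgebra R Q} {x : Q} (h : SCx B D x) (hD : D ≤ D') : SCx B D' x := by
  obtain ⟨h, hx, he⟩ := h
  letI := (Subalgebra.inclusion h).toRingHom.toAlgebra
  letI := (Subalgebra.inclusion (h.trans hD)).toRingHom.toAlgebra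
  refine ⟨h.trans hD, hD hx, ?_⟩
  let f : D →ₗ[B] D' :=
    { toFun := Subalgebra.inclusion hD
      map_add' := map_add _
      map_smul' := by
        intro m y
        rw [Algebra.smul_def, Algebra.smul_def, map_mul]; rfl }
  have := congrArg (TensorProduct.map f f) he
  simpa [f, TensorProduct.map_tmul] using this

theorem SCx.field {B D : Subalgebra R Q} {x : Q} (h : SCx B D x) (n : Ideal B) [n.IsMaximal] :
    ∃ r ∈ B, x - r ∈ (n.restrictScalars R).map (B.val.toLinearMap) * D.toSubmodule := by
  obtain ⟨h, hx, he⟩ := h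
  letI := (Subalgebra.inclusion h).toRingHom.toAlgebra
  obtain ⟨r, hr⟩ := sc_field_step n _ he
  refine ⟨r, r.2, ?_⟩
  have key : ∀ z : D, z ∈ n.map (algebraMap B D) →
      (z : Q) ∈ (n.restrictScalars R).map (B.val.toLinearMap) * D.toSubmodule := by
    intro z hz
    refine Submodule.span_induction (p := fun (z : D) _ => (z : Q) ∈ (n.restrictScalars R).map (B.val.toLinearMap) * D.toSubmodule) ?_ ?_ ?_ ?_ hz
    · rintro _ ⟨y, hy, rfl⟩
      have : ((algebraMap B D y : D) : Q) = (y : Q) * 1 := (mul_one _).symm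
      rw [this]
      exact Submodule.mul_mem_mul ⟨y, hy, rfl⟩ D.one_mem
    · simp
    · intro a b _ _ ha hb
      exact add_mem ha hb
    · intro a b _ hb
      have : ((a • b : D) : Q) = b * a := by rw [smul_eq_mul, mul_comm]; rfl
      rw [this]
      have h2 := Submodule.mul_mem_mul hb a.2 (N := D.toSubmodule)
      rw [mul_assoc] at h2
      rwa [(Subalgebra.isIdempotentElem_toSubmodule D).eq] at h2
  exact key _ hr

theorem SCx.inj {B B' D : Subalgebra R Q} (hB : B ≤ B') (hD : B' ≤ D) (n : Ideal B) [n.IsMaximal]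
    (b : Qˣ) (hb : (b : Q) ∈ B) (hn : ∀ r ∈ n, ∃ b' ∈ B', (r : Q) = b * b') {x r w : Q}
    (hr : r ∈ B) (hw : w ∈ D) (hxw : x = r + b * w)
    (h : SCx B D x) : SCx B' D w := by
  obtain ⟨h, hx, he⟩ := h
  letI := (Subalgebra.inclusion h).toRingHom.toAlgebra
  letI := (Subalgebra.inclusion hB).toRingHom.toAlgebra
  letI := (Subalgebra.inclusion hD).toRingHom.toAlgebra
  haveI : IsScalarTower B B' D := IsScalarTower.of_algebraMap_eq (fun _ => rfl)
  refine ⟨hD, hw, ?_⟩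
  refine sc_inj n ⟨b, hb⟩ ?_ ?_ _ ?_
  · rintro ⟨t, ht⟩ h0
    have : (b : Q) * t = 0 := congrArg Subtype.val h0
    exact Subtype.ext ((Units.mul_right_eq_zero b).1 this)
  · intro r hr
    obtain ⟨b', hb', e⟩ := hn r hr
    exact ⟨⟨b', hb'⟩, Subtype.ext e⟩
  · have e : (⟨x, hx⟩ : D) = algebraMap B D ⟨r, hr⟩ * 1 + (⟨b, hb⟩ : B) • (⟨w, hw⟩ : D) := by
      apply Subtype.ext
      refine hxw.trans ?_
      rw [Algebra.smul_def, mul_one]; rfl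
    rw [e, ← Algebra.smul_def, TensorProduct.add_tmul, TensorProduct.tmul_add, TensorProduct.smul_tmul,
      add_right_inj, TensorProduct.tmul_smul, ← TensorProduct.smul_tmul'] at he
    rw [smul_sub, he, sub_self]

end

section
open scoped TensorProduct
set_option linter.style.haveILetI false

variable {R Q : Type*} [CommRing R] [CommRing Q] [Algebra R Q]

theorem ideal_pow_le {B : Subalgebra R Q} {I : Submodule R Q} (h1 : I ≤ B.toSubmodule)
    (h2 : ∀ β ∈ B, ∀ y ∈ I, β * y ∈ I) (i : ℕ) (hi : 1 ≤ i) : I ^ i ≤ I := by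
  induction i, hi using Nat.le_induction with
  | base => simp
  | succ k hk ih =>
    rw [pow_succ]
    exact Submodule.mul_le.2 fun a ha c hc => h2 a (h1 (ih ha)) c hc

theorem IntOver.pow_mem {B : Subalgebra R Q} {I : Submodule R Q} (h1 : I ≤ B.toSubmodule)
    (h2 : ∀ β ∈ B, ∀ y ∈ I, β * y ∈ I) {q : Q} (hq : q ∈ B) (h : IntOver I q) :
    ∃ n, q ^ n ∈ I := by
  obtain ⟨n, hn, c, hc, e⟩ := h
  refine ⟨n, ?_⟩
  rw [eq_neg_of_add_eq_zero_left e]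
  refine neg_mem (sum_mem fun i hi => ?_)
  rw [mul_comm]
  exact h2 _ (B.pow_mem hq _) _ (ideal_pow_le h1 h2 i (Finset.mem_Icc.1 hi).1 (hc i hi))

theorem IntOver.scale {J : Submodule R Q} (b : Qˣ) {q : Q}
    (h : IntOver (Submodule.span R {(b : Q)} * J) (b * q)) : IntOver J q := by
  obtain ⟨n, hn, c, hc, e⟩ := h
  refine ⟨n, hn, fun i => (b⁻¹ : Qˣ) ^ i * c i, ?_, ?_⟩
  · intro i hi
    have := hc i hi
    rw [mul_pow, Submodule.span_pow, Set.singleton_pow, Submodule.mem_span_singleton_mul] at this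
    obtain ⟨z, hz, hz'⟩ := this
    change ((b⁻¹ : Qˣ) : Q) ^ i * c i ∈ J ^ i
    rw [← hz', ← mul_assoc, ← mul_pow]
    simpa using hz
  · have : ((b⁻¹ : Qˣ) : Q) ^ n * ((b * q) ^ n + ∑ i ∈ Finset.Icc 1 n, c i * (b * q) ^ (n - i)) = 0 := by
      rw [e, mul_zero]
    rw [← this, mul_add, Finset.mul_sum]
    congr 1
    · rw [← mul_pow, ← mul_assoc]; simp
    · refine Finset.sum_congr rfl fun i hi => ?_
      obtain ⟨k, rfl⟩ := Nat.exists_eq_add_of_le (Finset.mem_Icc.1 hi).2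
      have h1 : ((b⁻¹ : Qˣ) : Q) ^ k * (b : Q) ^ k = 1 := by rw [← mul_pow]; simp
      rw [Nat.add_sub_cancel_left, pow_add, mul_pow]
      linear_combination (-(((b⁻¹ : Qˣ) : Q) ^ i * c i * q ^ k)) * h1

theorem partB [IsNoetherianRing R] (k : ℕ∞) : ∀ (B D : Subalgebra R Q) (x : Q), ArfSub B →
    D.toSubmodule.FG → (∃ c : Qˣ, (c : Q) ∈ B ∧ ∀ d ∈ D, (c : Q) * d ∈ B) →
    Module.length R (D.toSubmodule.map B.toSubmodule.mkQ) = k → k ≠ ⊤ → SCx B D x → x ∈ B := by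
  induction k using WellFoundedLT.induction with
  | ind k ih =>
  intro B D x hArf hfg hc hlen hk hx
  obtain ⟨c, hcB, hcD⟩ := hc
  have hBD : B ≤ D := hx.1
  by_cases hDB : D ≤ B
  · exact hDB hx.2.1
  letI := (Subalgebra.inclusion hBD).toRingHom.toAlgebra
  haveI : IsScalarTower R B D := IsScalarTower.of_algebraMap_eq (fun _ => rfl)
  haveI : Module.Finite R D := Module.Finite.iff_fg.2 hfg
  haveI : Module.Finite B D := Module.Finite.of_restrictScalars_finite R B D
  obtain ⟨n, N, hnmax, hNtop, h1N, hnN⟩ := ex_max_step (B := B) (D := D) (by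
    intro hs
    apply hDB
    intro d hd
    obtain ⟨β, hβ⟩ := hs ⟨d, hd⟩
    have : (β : Q) = d := congrArg Subtype.val hβ
    rw [← this]; exact β.2)
  have hBN : ∀ β : B, algebraMap B D β ∈ N := fun β => by
    have := N.smul_mem β h1N
    rwa [Algebra.smul_def, mul_one] at this
  set n' : Submodule R Q := (n.restrictScalars R).map B.val.toLinearMap with hn'
  have memn' : ∀ q : Q, q ∈ n' ↔ ∃ hq : q ∈ B, (⟨q, hq⟩ : B) ∈ n := by
    intro q
    constructor
    · rintro ⟨y, hy, rfl⟩; exact ⟨y.2, hy⟩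
    · rintro ⟨hq, h⟩; exact ⟨_, h, rfl⟩
  have hn'B : n' ≤ B.toSubmodule := fun q hq => ((memn' q).1 hq).1
  have hBn' : ∀ β ∈ B, ∀ y ∈ n', β * y ∈ n' := by
    intro β hβ y hy
    obtain ⟨hq, h⟩ := (memn' y).1 hy
    exact (memn' _).2 ⟨mul_mem hβ hq, n.mul_mem_left ⟨β, hβ⟩ h⟩

  set nD : Submodule R Q := n' * D.toSubmodule with hnD
  have hnDD : nD ≤ D.toSubmodule := by
    refine Submodule.mul_le.2 fun a ha d hd => ?_
    exact D.mul_mem (hBD (hn'B ha)) hd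
  have hDnD : ∀ d ∈ D, ∀ y ∈ nD, d * y ∈ nD := by
    intro d hd y hy
    have h := Submodule.mul_mem_mul hy (show d ∈ D.toSubmodule from hd)
    rw [hnD, mul_assoc, (Subalgebra.isIdempotentElem_toSubmodule D).eq] at h
    rwa [mul_comm]
  have hnDN : ∀ (y : Q) (hy : y ∈ nD), (⟨y, hnDD hy⟩ : D) ∈ N := by
    have : nD ≤ (N.restrictScalars R).map D.val.toLinearMap := by
      refine Submodule.mul_le.2 fun a ha d hd => ?_
      obtain ⟨hq, h⟩ := (memn' a).1 ha
      exact ⟨_, hnN _ h ⟨d, hd⟩, rfl⟩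
    intro y hy
    obtain ⟨z, hz, e⟩ := this hy
    have : z = ⟨y, hnDD hy⟩ := Subtype.ext e
    rw [← this]; exact hz
  have hn'nD : n' ≤ nD := fun y hy => by
    have := Submodule.mul_mem_mul hy (show (1 : Q) ∈ D.toSubmodule from D.one_mem)
    rwa [mul_one] at this
  have h1nD : (1 : Q) ∉ nD := by
    intro h1
    apply hNtop
    rw [eq_top_iff]
    rintro ⟨d, hd⟩ -
    have := hDnD d hd 1 h1
    rw [mul_one] at this
    exact hnDN d this
  have hinter : ∀ q ∈ nD, q ∈ B → q ∈ n' := by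
    intro q hq hqB
    by_contra hcon
    have hq' : (⟨q, hqB⟩ : B) ∉ n := fun h => hcon ((memn' q).2 ⟨hqB, h⟩)
    obtain ⟨y, i, hi, e⟩ := hnmax.exists_inv hq'
    apply h1nD
    have e' : (y : Q) * q + i = 1 := congrArg Subtype.val e
    rw [← e']
    exact add_mem (hDnD _ (hBD y.2) _ hq) (hn'nD ((memn' _).2 ⟨i.2, hi⟩))
  have hcn : (c : Q) ∈ n' := by
    by_contra hcon
    have hq' : (⟨c, hcB⟩ : B) ∉ n := fun h => hcon ((memn' c).2 ⟨hcB, h⟩)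
    obtain ⟨y, i, hi, e⟩ := hnmax.exists_inv hq'
    apply hNtop
    rw [eq_top_iff]
    rintro ⟨d, hd⟩ -
    have e' : (y : Q) * c + i = 1 := congrArg Subtype.val e
    have : (⟨d, hd⟩ : D) = algebraMap B D ⟨y * (c * d), mul_mem y.2 (hcD d hd)⟩ + i • ⟨d, hd⟩ := by
      apply Subtype.ext
      rw [Algebra.smul_def]
      change d = y * (c * d) + i * d
      linear_combination (-d) * e'
    rw [this]
    exact N.add_mem (hBN _) (hnN i hi _)
  obtain ⟨b, hbn, hb⟩ := hArf n' hn'B hBn' ⟨c, hcn⟩ (by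
    intro q hq h
    obtain ⟨m, hm⟩ := h.pow_mem hn'B hBn' hq
    obtain ⟨hq', hm'⟩ := (memn' _).1 hm
    exact (memn' _).2 ⟨hq, hnmax.isPrime.mem_of_pow_mem m hm'⟩)
  have hbB : (b : Q) ∈ B := hn'B hbn
  let B' : Subalgebra R Q := (n'.comap (LinearMap.mulLeft R (b : Q))).toSubalgebra
    (by simpa using hbn) (by
      intro y z hy hz
      obtain ⟨t, ht, e⟩ := hb _ hy _ hz
      simp only [LinearMap.mulLeft_apply] at e
      have : (b : Q) * (y * z) = t := by
        have := (Units.mul_right_inj b (b := (b : Q) * (y * z)) (c := t)).1 (by linear_combination e)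
        exact this
      change (b : Q) * (y * z) ∈ n'
      rw [this]; exact ht)
  have memB' : ∀ q, q ∈ B' ↔ (b : Q) * q ∈ n' := fun q => Iff.rfl
  have hnDmul : ∀ y ∈ nD, ∀ z ∈ nD, ∃ t ∈ nD, y * z = b * t := by
    have h1 : nD * nD ≤ Submodule.span R {(b : Q)} * nD := by
      have h2 : n' * n' ≤ Submodule.span R {(b : Q)} * n' := by
        refine Submodule.mul_le.2 fun y hy z hz => ?_
        obtain ⟨t, ht, e⟩ := hb y hy z hz
        exact Submodule.mem_span_singleton_mul.2 ⟨t, ht, e.symm⟩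
      calc nD * nD = (n' * n') * (D.toSubmodule * D.toSubmodule) := by rw [hnD]; ring
        _ ≤ (Submodule.span R {(b : Q)} * n') * D.toSubmodule := by
          refine mul_le_mul' h2 ?_
          rw [(Subalgebra.isIdempotentElem_toSubmodule D).eq]
        _ = _ := by rw [hnD, mul_assoc]
    intro y hy z hz
    obtain ⟨t, ht, e⟩ := Submodule.mem_span_singleton_mul.1 (h1 (Submodule.mul_mem_mul hy hz))
    exact ⟨t, ht, e.symm⟩
  let D' : Subalgebra R Q := (nD.comap (LinearMap.mulLeft R (b : Q))).toSubalgebra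
    (by simpa using hn'nD hbn) (by
      intro y z hy hz
      obtain ⟨t, ht, e⟩ := hnDmul _ hy _ hz
      simp only [LinearMap.mulLeft_apply] at e
      have : (b : Q) * (y * z) = t := by
        have := (Units.mul_right_inj b (b := (b : Q) * (y * z)) (c := t)).1 (by linear_combination e)
        exact this
      change (b : Q) * (y * z) ∈ nD
      rw [this]; exact ht)
  have memD' : ∀ q, q ∈ D' ↔ (b : Q) * q ∈ nD := fun q => Iff.rfl
  have hBB' : B ≤ B' := fun β hβ => (memB' β).2 (by rw [mul_comm]; exact hBn' β hβ _ hbn)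
  have hB'D' : B' ≤ D' := fun q hq => hn'nD hq
  have hDD' : D ≤ D' := fun d hd => (memD' d).2 (by rw [mul_comm]; exact hDnD d hd _ (hn'nD hbn))
  have hmulinv : ∀ q : Q, (b : Q) * ((b⁻¹ : Qˣ) * q) = q := fun q => by rw [← mul_assoc]; simp
  obtain ⟨r, hrB, hr⟩ := hx.field n
  set w : Q := (b⁻¹ : Qˣ) * (x - r) with hw
  have hbw : (b : Q) * w = x - r := hmulinv _
  have hxw : x = r + b * w := by rw [hbw]; ring
  have hwD' : w ∈ D' := (memD' w).2 (by rw [hbw]; exact hr)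
  have hSC : SCx B' D' w := (hx.mono hDD').inj hBB' hB'D' n b hbB (by
    intro r hr
    exact ⟨(b⁻¹ : Qˣ) * r, (memB' _).2 (by rw [hmulinv]; exact (memn' _).2 ⟨r.2, hr⟩),
      (hmulinv _).symm⟩) hrB hwD' hxw

  let Ψ : (Q ⧸ B'.toSubmodule) →ₗ[R] (Q ⧸ B.toSubmodule) :=
    B'.toSubmodule.mapQ B.toSubmodule (LinearMap.mulLeft R (b : Q)) (fun q hq => hn'B hq)
  have hΨ : ∀ z ∈ D'.toSubmodule.map B'.toSubmodule.mkQ, Ψ z ∈ nD.map B.toSubmodule.mkQ := by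
    rintro _ ⟨d, hd, rfl⟩
    exact ⟨b * d, hd, rfl⟩
  have hlen1 : Module.length R (D'.toSubmodule.map B'.toSubmodule.mkQ) ≤
      Module.length R (nD.map B.toSubmodule.mkQ) := by
    refine Module.length_le_of_injective (Ψ.restrict hΨ) ?_
    rw [← LinearMap.ker_eq_bot, LinearMap.ker_eq_bot']
    rintro ⟨_, ⟨d, hd, rfl⟩⟩ h0
    have h0' : Ψ (B'.toSubmodule.mkQ d) = 0 := congrArg Subtype.val h0
    have h1 : B.toSubmodule.mkQ ((b : Q) * d) = 0 := h0'
    rw [Submodule.mkQ_apply, Submodule.Quotient.mk_eq_zero] at h1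
    apply Subtype.ext
    change B'.toSubmodule.mkQ d = 0
    rw [Submodule.mkQ_apply, Submodule.Quotient.mk_eq_zero]
    exact hinter _ hd h1
  have hlen2 : Module.length R (nD.map B.toSubmodule.mkQ) < k := by
    have hlt : nD.map B.toSubmodule.mkQ < D.toSubmodule.map B.toSubmodule.mkQ := by
      refine lt_of_le_of_ne (Submodule.map_mono hnDD) fun he => hNtop ?_
      rw [eq_top_iff]
      rintro ⟨d, hd⟩ -
      have h1 : B.toSubmodule.mkQ d ∈ nD.map B.toSubmodule.mkQ := by
        rw [he]; exact ⟨d, hd, rfl⟩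
      obtain ⟨y, hy, e⟩ := h1
      have h2 : d - y ∈ B.toSubmodule := by
        rw [← Submodule.Quotient.mk_eq_zero, Submodule.Quotient.mk_sub]
        exact sub_eq_zero.2 e.symm
      have h3 : (⟨d, hd⟩ : D) = algebraMap B D ⟨d - y, h2⟩ + ⟨y, hnDD hy⟩ := by
        apply Subtype.ext
        change d = (d - y) + y
        ring
      rw [h3]
      exact N.add_mem (hBN _) (hnDN y hy)
    rw [Module.length_submodule] at hlen ⊢
    rw [← hlen]
    refine Order.height_strictMono hlt ?_
    refine lt_of_le_of_lt (Order.height_mono hlt.le) ?_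
    rw [hlen]; exact hk.lt_top
  have hlt := lt_of_le_of_lt hlen1 hlen2
  have hwB' : w ∈ B' := by
    refine ih _ hlt B' D' w ?_ ?_ ⟨c, hBB' hcB, ?_⟩ rfl hlt.ne_top hSC
    ·
      intro J hJB' hB'J hu hJ
      obtain ⟨u, hu⟩ := hu
      have hmain := hArf (Submodule.span R {(b : Q)} * J) ?_ ?_ ?_ ?_
      · obtain ⟨j, hj, hjm⟩ := hmain
        obtain ⟨j', hj', e⟩ := Submodule.mem_span_singleton_mul.1 hj
        have ej : ((b⁻¹ * j : Qˣ) : Q) = j' := by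
          rw [Units.val_mul, ← e, ← mul_assoc]; simp
        refine ⟨b⁻¹ * j, by rw [ej]; exact hj', ?_⟩
        intro y hy z hz
        obtain ⟨t, ht, e2⟩ := hjm (b * y) (Submodule.mem_span_singleton_mul.2 ⟨y, hy, rfl⟩)
          (b * z) (Submodule.mem_span_singleton_mul.2 ⟨z, hz, rfl⟩)
        obtain ⟨t', ht', rfl⟩ := Submodule.mem_span_singleton_mul.1 ht
        refine ⟨t', ht', ?_⟩
        rw [ej]
        rw [← e] at e2
        exact (Units.mul_right_inj (b * b)).1 (by
          simp only [Units.val_mul]; linear_combination e2)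
      · refine Submodule.mul_le.2 fun m hm y hy => ?_
        obtain ⟨r, rfl⟩ := Submodule.mem_span_singleton.1 hm
        rw [smul_mul_assoc]
        exact B.toSubmodule.smul_mem r (hn'B (hJB' hy))
      · intro β hβ y hy
        obtain ⟨y', hy', rfl⟩ := Submodule.mem_span_singleton_mul.1 hy
        exact Submodule.mem_span_singleton_mul.2 ⟨β * y', hB'J β (hBB' hβ) y' hy', by ring⟩
      · exact ⟨b * u, Submodule.mem_span_singleton_mul.2 ⟨u, hu, by simp⟩⟩
      · intro q hq hint
        have hle : Submodule.span R {(b : Q)} * J ≤ n' := by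
          refine Submodule.mul_le.2 fun m hm y hy => ?_
          obtain ⟨r, rfl⟩ := Submodule.mem_span_singleton.1 hm
          rw [smul_mul_assoc]
          exact n'.smul_mem r (hJB' hy)
        obtain ⟨m, hm⟩ : ∃ m, q ^ m ∈ n' := by
          refine IntOver.pow_mem hn'B hBn' hq ?_
          obtain ⟨m, hm, c, hc, e⟩ := hint
          exact ⟨m, hm, c, fun i hi => pow_le_pow_left' hle i (hc i hi), e⟩
        obtain ⟨hq', hm'⟩ := (memn' _).1 hm
        have hqn : q ∈ n' := (memn' _).2 ⟨hq, hnmax.isPrime.mem_of_pow_mem m hm'⟩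
        refine Submodule.mem_span_singleton_mul.2 ⟨(b⁻¹ : Qˣ) * q, ?_, hmulinv q⟩
        refine hJ _ ((memB' _).2 (by rw [hmulinv]; exact hqn)) ?_
        apply IntOver.scale b
        rw [hmulinv]; exact hint
    · have hDn : IsNoetherian R D.toSubmodule := isNoetherian_of_isNoetherianRing_of_finite R D
      have : nD.FG := (isNoetherian_submodule.1 hDn) nD hnDD
      have e : D'.toSubmodule = nD.map (LinearMap.mulLeft R ((b⁻¹ : Qˣ) : Q)) := by
        ext q
        constructor
        · intro hq; exact ⟨b * q, hq, by simp⟩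
        · rintro ⟨y, hy, rfl⟩
          change (b : Q) * ((b⁻¹ : Qˣ) * y) ∈ nD
          rw [hmulinv]; exact hy
      rw [e]; exact this.map _
    · intro d hd
      refine (memB' _).2 ?_
      refine hinter _ ?_ ?_
      · have := hDnD c (hBD hcB) _ hd
        convert this using 1; simp only [LinearMap.mulLeft_apply]; ring
      · have := hcD _ (hnDD hd)
        convert this using 1; simp only [LinearMap.mulLeft_apply]; ring
  rw [hxw]
  exact add_mem hrB (hn'B hwB')

end

section
open scoped TensorProduct
set_option linter.style.haveILetI false

theorem tensor_fg {R S : Type*} [CommRing R] [CommRing S] [Algebra R S] (x : S)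
    (h : x ⊗ₜ[R] (1 : S) = (1 : S) ⊗ₜ[R] x) :
    ∃ (A : Subalgebra R S) (hx : x ∈ A), A.FG ∧
      (⟨x, hx⟩ : A) ⊗ₜ[R] (1 : A) = (1 : A) ⊗ₜ[R] (⟨x, hx⟩ : A) := by
  classical
  let A1 : Subalgebra R S := Algebra.adjoin R {x}
  have hA1 : A1.FG := ⟨{x}, by simp [A1]⟩
  have hx1 : x ∈ A1 := Algebra.subset_adjoin rfl
  obtain ⟨B1, hB1, hfg1, e1⟩ := TensorProduct.Algebra.eq_of_fg_of_subtype_eq (N := S) hA1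
    (t := (⟨x, hx1⟩ : A1) ⊗ₜ[R] (1 : S)) (t' := (1 : A1) ⊗ₜ[R] x) (by simpa using h)
  simp only [LinearMap.rTensor_tmul, AlgHom.toLinearMap_apply, map_one] at e1
  have e2 := congrArg (TensorProduct.comm R B1 S) e1
  simp only [TensorProduct.comm_tmul] at e2
  obtain ⟨B2, hB2, hfg2, e3⟩ := TensorProduct.Algebra.eq_of_fg_of_subtype_eq (N := B1) hA1
    (t' := (⟨x, hx1⟩ : A1) ⊗ₜ[R] (1 : B1)) (t := (1 : A1) ⊗ₜ[R] (Subalgebra.inclusion hB1 ⟨x, hx1⟩))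
    (by simpa using e2)
  simp only [LinearMap.rTensor_tmul, AlgHom.toLinearMap_apply, map_one] at e3
  refine ⟨B1 ⊔ B2, le_sup_left (a := B1) (hB1 hx1), hfg1.sup hfg2, ?_⟩
  have e4 := congrArg (TensorProduct.map (Subalgebra.inclusion (le_sup_right (a := B1) (b := B2))).toLinearMap
    (Subalgebra.inclusion (le_sup_left (a := B1) (b := B2))).toLinearMap) e3
  simp only [TensorProduct.map_tmul, AlgHom.toLinearMap_apply, map_one] at e4
  exact e4.symm

theorem integral_of_stab {R Q : Type*} [CommRing R] [CommRing Q] [Algebra R Q]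
    {N : Submodule R Q} (hN : N.FG) (u : Q) (hu : u ∈ N) (hu' : u ∈ nonZeroDivisors Q) (q : Q)
    (hq : ∀ y ∈ N, q * y ∈ N) : IsIntegral R q := by
  haveI : Module.Finite R N := Module.Finite.iff_fg.2 hN
  let f : N →ₗ[R] N := (LinearMap.mulLeft R q).restrict hq
  obtain ⟨p, hp, h0⟩ := LinearMap.exists_monic_and_aeval_eq_zero R f
  refine ⟨p, hp, ?_⟩
  have key : ∀ p : Polynomial R, ∀ y : N, ((Polynomial.aeval f p y : N) : Q) = Polynomial.aeval q p * y := by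
    intro p y
    induction p using Polynomial.induction_on with
    | C a => simp [Algebra.smul_def, Module.algebraMap_end_apply]
    | add p q hp hq => simp [hp, hq, add_mul]
    | monomial n a ih =>
      rw [pow_succ', mul_left_comm, map_mul, Module.End.mul_apply, Polynomial.aeval_X,
       map_mul (Polynomial.aeval q), Polynomial.aeval_X, mul_assoc, ← ih]
      rfl
  have := key p ⟨u, hu⟩
  rw [h0] at this
  rw [← Polynomial.aeval_def]
  exact (mul_right_mem_nonZeroDivisors_eq_zero_iff hu').1 this.symm

theorem memIC_of_integral {R : Type*} [CommRing R] {I : Ideal R} {a u : R} (ha : a ∈ I)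
    {q : FractionRing R} (hq : IsIntegral R q) (hu : algebraMap R (FractionRing R) u = algebraMap R _ a * q) :
    MemIdealIntegralClosure I u := by
  have hinj : Function.Injective (algebraMap R (FractionRing R)) := IsFractionRing.injective R _
  obtain ⟨p, hp, h0⟩ := hq
  rw [← Polynomial.aeval_def] at h0
  by_cases hd : p.natDegree = 0
  · rw [hp.natDegree_eq_zero.1 hd] at h0
    have h1 : (1 : R) = 0 := hinj (by simpa using h0)
    exact ⟨1, one_pos, 0, by simp, by simpa using (by rw [← mul_one u, h1, mul_zero] : u = 0)⟩
  refine ⟨p.natDegree, Nat.pos_of_ne_zero hd, fun i => p.coeff (p.natDegree - i) * a ^ i, ?_, ?_⟩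
  · intro i _
    exact Ideal.mul_mem_left _ _ (Ideal.pow_mem_pow ha i)
  · apply hinj
    rw [map_zero]
    have : algebraMap R (FractionRing R) a ^ p.natDegree * Polynomial.aeval q p = 0 := by rw [h0, mul_zero]
    rw [← this, Polynomial.aeval_eq_sum_range, Finset.sum_range_succ, hp.coeff_natDegree, one_smul, mul_add,
      ← mul_pow, ← hu, map_add, map_pow, map_sum, Finset.mul_sum, add_comm]
    congr 1
    refine Finset.sum_nbij' (fun i => p.natDegree - i) (fun i => p.natDegree - i) ?_ ?_ ?_ ?_ ?_
    · intro i hi; simp only [Finset.mem_Icc, Finset.mem_range] at *; omega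
    · intro i hi; simp only [Finset.mem_Icc, Finset.mem_range] at *; omega
    · intro i hi; simp only [Finset.mem_Icc] at *; omega
    · intro i hi; simp only [Finset.mem_range] at *; omega
    · intro i hi
      obtain ⟨k, hk⟩ := Nat.exists_eq_add_of_le (Finset.mem_Icc.1 hi).2
      have e : p.natDegree - i = k := by omega
      simp only [e]
      rw [hk, map_mul, map_mul, map_pow, map_pow, hu, Algebra.smul_def]
      ring

theorem finite_len {R M : Type*} [CommRing R] [IsNoetherianRing R] [AddCommGroup M] [Module R M] [Module.Finite R M]
    (I : Ideal R) [IsArtinianRing (R ⧸ I)] (h : ∀ r ∈ I, ∀ m : M, r • m = 0) : Module.length R M ≠ ⊤ := by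
  have hM : Module.IsTorsionBySet R M I := fun m a => h a a.2 m
  letI := hM.module
  haveI : IsScalarTower R (R ⧸ I) M := hM.isScalarTower
  haveI : Module.Finite (R ⧸ I) M := Module.Finite.of_restrictScalars_finite R _ _
  rw [Module.length_eq_of_surjective (R := R ⧸ I) Ideal.Quotient.mk_surjective]
  exact Module.length_ne_top

theorem weaklyArf_key {R : Type*} [CommRing R] (hw : IsWeaklyArfRing R) {I : Ideal R}
    (hI : I.IsIntegrallyClosedIdeal) {a : R} (ha : a ∈ I) (ha0 : a ∈ nonZeroDivisors R)
    (hint : ∀ y ∈ I, IsIntegral R (IsLocalization.mk' (FractionRing R) y (⟨a, ha0⟩ : nonZeroDivisors R))) :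
    ∀ y ∈ I, ∀ z ∈ I, ∃ u ∈ I, y * z = a * u := by
  intro y hy z hz
  obtain ⟨u, hu⟩ := Ideal.mem_span_singleton.1 (hw a y z ha0 (hint y hy) (hint z hz))
  refine ⟨u, ?_, hu⟩
  have hmem : u ∈ idealIntegralClosure I := by
    refine memIC_of_integral ha ((hint y hy).mul (hint z hz)) ?_
    have hunit : IsUnit (algebraMap R (FractionRing R) a) := IsLocalization.map_units (FractionRing R) (⟨a, ha0⟩ : nonZeroDivisors R)
    refine hunit.mul_left_cancel ?_
    rw [← map_mul, ← hu, map_mul]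
    have e1 := IsLocalization.mk'_spec' (FractionRing R) y (⟨a, ha0⟩ : nonZeroDivisors R)
    have e2 := IsLocalization.mk'_spec' (FractionRing R) z (⟨a, ha0⟩ : nonZeroDivisors R)
    simp only at e1 e2
    rw [← e1, ← e2]; ring
  rw [hI] at hmem
  exact hmem

theorem nzd_of_isUnit_map {R : Type*} [CommRing R] {a : R} (h : IsUnit (algebraMap R (FractionRing R) a)) :
    a ∈ nonZeroDivisors R := by
  rw [mem_nonZeroDivisors_iff_right]
  intro y hy
  apply IsFractionRing.injective R (FractionRing R)
  rw [map_zero]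
  exact (h.mul_left_eq_zero).1 (by rw [← map_mul, hy, map_zero])

theorem exists_denom {R : Type*} [CommRing R] {N : Submodule R (FractionRing R)} (hN : N.FG) :
    ∃ c ∈ nonZeroDivisors R, ∀ d ∈ N, ∃ r : R, algebraMap R (FractionRing R) r = algebraMap R (FractionRing R) c * d := by
  obtain ⟨s, hs⟩ := hN
  obtain ⟨c, hc⟩ := IsLocalization.exist_integer_multiples_of_finset (nonZeroDivisors R) s
  refine ⟨c, c.2, ?_⟩
  intro d hd
  rw [← hs] at hd
  induction hd using Submodule.span_induction with
  | mem x h =>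
    obtain ⟨r, hr⟩ := hc x h
    exact ⟨r, by rw [hr, Algebra.smul_def]⟩
  | zero => exact ⟨0, by simp⟩
  | add x y _ _ hx hy =>
    obtain ⟨r, hr⟩ := hx
    obtain ⟨r', hr'⟩ := hy
    exact ⟨r + r', by rw [map_add, hr, hr', mul_add]⟩
  | smul t x _ hx =>
    obtain ⟨r, hr⟩ := hx
    exact ⟨t * r, by rw [map_mul, hr, Algebra.smul_def]; ring⟩

theorem arfSub_bot {R : Type*} [CommRing R] [IsNoetherianRing R] (h : IsArfRing R) :
    ArfSub (⊥ : Subalgebra R (FractionRing R)) := by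
  intro I hIB hBI hu hI
  obtain ⟨u, hu⟩ := hu
  have hinj : Function.Injective (algebraMap R (FractionRing R)) := IsFractionRing.injective R _
  let I0 : Ideal R := I.comap (Algebra.linearMap R (FractionRing R))
  have hmap : Submodule.map (Algebra.ofId R (FractionRing R)).toLinearMap I0 = I := by
    ext q
    constructor
    · rintro ⟨y, hy, rfl⟩; exact hy
    · intro hq
      obtain ⟨y, rfl⟩ := Algebra.mem_bot.1 (hIB hq)
      exact ⟨y, hq, rfl⟩
  have hI0 : I0.IsIntegrallyClosedIdeal := by
    ext y
    constructor
    · rintro ⟨n, hn, c, hc, e⟩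
      refine hI _ (Algebra.mem_bot.2 ⟨y, rfl⟩) ⟨n, hn, fun i => algebraMap R _ (c i), ?_, ?_⟩
      · intro i hi
        rw [← hmap, ← Submodule.map_pow]
        exact ⟨c i, hc i hi, rfl⟩
      · have := congrArg (algebraMap R (FractionRing R)) e
        simpa using this
    · intro hy
      exact ⟨1, one_pos, fun _ => -y, by simpa using hy, by simp⟩
  obtain ⟨x, hx⟩ := Algebra.mem_bot.1 (hIB hu)
  have hx0 : x ∈ nonZeroDivisors R := nzd_of_isUnit_map (by rw [hx]; exact u.isUnit)
  have hxI : x ∈ I0 := by change algebraMap R _ x ∈ I; rw [hx]; exact hu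
  obtain ⟨n, a, ha, hpow⟩ := h.1 I0 hI0 ⟨x, hxI, hx0⟩
  have ha0 : a ∈ nonZeroDivisors R := by
    have h1 : x ^ (n + 1) ∈ Ideal.span {a} * I0 ^ n := by
      rw [← hpow]; exact Ideal.pow_mem_pow hxI _
    obtain ⟨t, _, e⟩ := Ideal.mem_span_singleton_mul.1 h1
    have h2 : a * t ∈ nonZeroDivisors R := by rw [e]; exact pow_mem hx0 _
    exact (mul_mem_nonZeroDivisors.1 h2).1
  have hunit : IsUnit (algebraMap R (FractionRing R) a) := IsLocalization.map_units (FractionRing R) (⟨a, ha0⟩ : nonZeroDivisors R)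
  have key := weaklyArf_key h.2 hI0 ha ha0 (by
    intro y hy
    refine integral_of_stab (N := Submodule.map (Algebra.linearMap R (FractionRing R)) (I0 ^ n))
      ((IsNoetherian.noetherian (I0 ^ n)).map _) (algebraMap R _ (x ^ n))
      ⟨x ^ n, Ideal.pow_mem_pow hxI n, rfl⟩ ?_ _ ?_
    · exact (IsLocalization.map_units (FractionRing R) (⟨x ^ n, pow_mem hx0 n⟩ : nonZeroDivisors R)).mem_nonZeroDivisors
    · rintro _ ⟨z, hz, rfl⟩
      have h1 : y * z ∈ Ideal.span {a} * I0 ^ n := by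
        rw [← hpow, pow_succ']; exact Ideal.mul_mem_mul hy hz
      obtain ⟨t, ht, e⟩ := Ideal.mem_span_singleton_mul.1 h1
      refine ⟨t, ht, ?_⟩
      refine hunit.mul_left_cancel ?_
      have e1 := IsLocalization.mk'_spec' (FractionRing R) y (⟨a, ha0⟩ : nonZeroDivisors R)
      simp only at e1
      simp only [Algebra.linearMap_apply]
      rw [← map_mul, e, ← mul_assoc, e1, map_mul])
  refine ⟨hunit.unit, ha, ?_⟩
  intro y hy z hz
  obtain ⟨y, rfl⟩ := Algebra.mem_bot.1 (hIB hy)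
  obtain ⟨z, rfl⟩ := Algebra.mem_bot.1 (hIB hz)
  obtain ⟨t, ht, e⟩ := key y hy z hz
  exact ⟨algebraMap R _ t, ht, by rw [IsUnit.unit_spec, ← map_mul, ← map_mul, e]⟩

theorem arf_strict {R : Type*} [CommRing R] [IsNoetherianRing R]
    (hart : ∀ x ∈ nonZeroDivisors R, IsArtinianRing (R ⧸ Ideal.span {x})) (h : IsArfRing R) :
    IsStrictlyClosed R := by
  rintro x ⟨hxi, hx⟩
  obtain ⟨A, hxA, hfg, e⟩ := tensor_fg _ hx
  haveI : Algebra.IsIntegral R A := ⟨fun a =>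
    (isIntegral_algHom_iff (A.val) Subtype.val_injective).1 (integralClosure.AlgebraIsIntegral.isIntegral _)⟩
  haveI : Algebra.FiniteType R A := A.fg_iff_finiteType.1 hfg
  haveI : Module.Finite R A := Algebra.IsIntegral.finite (R := R) (A := A)
  let D : Subalgebra R (FractionRing R) := A.map (integralClosure R (FractionRing R)).val
  have hDfg : D.toSubmodule.FG := by
    have : A.toSubmodule.FG := Module.Finite.iff_fg.1 ‹_›
    exact this.map (integralClosure R (FractionRing R)).val.toLinearMap
  have hxD : x ∈ D := ⟨_, hxA, rfl⟩
  let f : A →ₗ[R] D :=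
    { toFun := fun a => ⟨a.1.1, ⟨a.1, a.2, rfl⟩⟩
      map_add' := fun _ _ => rfl
      map_smul' := fun _ _ => rfl }
  have e2 : (⟨x, hxD⟩ : D) ⊗ₜ[R] (1 : D) = (1 : D) ⊗ₜ[R] (⟨x, hxD⟩ : D) :=
    congrArg (TensorProduct.map f f) e
  have hSC : SCx (⊥ : Subalgebra R (FractionRing R)) D x := by
    refine ⟨bot_le, hxD, ?_⟩
    letI := (Subalgebra.inclusion (bot_le : ⊥ ≤ D)).toRingHom.toAlgebra
    haveI : IsScalarTower R (⊥ : Subalgebra R (FractionRing R)) D := IsScalarTower.of_algebraMap_eq (fun _ => rfl)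
    exact congrArg (TensorProduct.mapOfCompatibleSMul (⊥ : Subalgebra R (FractionRing R)) R R D D) e2
  obtain ⟨c, hc, hcD⟩ := exists_denom hDfg
  have hunit : IsUnit (algebraMap R (FractionRing R) c) := IsLocalization.map_units (FractionRing R) (⟨c, hc⟩ : nonZeroDivisors R)
  refine Algebra.mem_bot.1 (partB _ ⊥ D x (arfSub_bot h) hDfg ⟨hunit.unit, ?_, ?_⟩ rfl ?_ hSC)
  · exact Algebra.mem_bot.2 ⟨c, rfl⟩
  · intro d hd
    exact Algebra.mem_bot.2 (hcD d hd)
  · haveI := hart c hc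
    haveI : Module.Finite R (D.toSubmodule.map (⊥ : Subalgebra R (FractionRing R)).toSubmodule.mkQ) :=
      Module.Finite.iff_fg.2 (hDfg.map _)
    refine finite_len (Ideal.span {c}) ?_
    rintro r hr ⟨_, ⟨d, hd, rfl⟩⟩
    obtain ⟨s, rfl⟩ := Ideal.mem_span_singleton.1 hr
    apply Subtype.ext
    change (c * s) • (⊥ : Subalgebra R (FractionRing R)).toSubmodule.mkQ d = 0
    rw [mul_comm, mul_smul, ← map_smul]
    obtain ⟨t, ht⟩ := hcD d hd
    have : (⊥ : Subalgebra R (FractionRing R)).toSubmodule.mkQ (c • d) = 0 := by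
      rw [Submodule.mkQ_apply, Submodule.Quotient.mk_eq_zero]
      exact Algebra.mem_bot.2 ⟨t, by rw [ht, Algebra.smul_def]⟩
    rw [this, smul_zero]

end

section
open scoped TensorProduct
set_option linter.style.haveILetI false

theorem art_of_dim_one {R : Type*} [CommRing R] [IsNoetherianRing R] (hd : ringKrullDim R = 1) :
    ∀ x ∈ nonZeroDivisors R, IsArtinianRing (R ⧸ Ideal.span {x}) := by
  intro x hx
  rw [isArtinianRing_iff_krullDimLE_zero, Ring.krullDimLE_iff]
  have := ringKrullDim_quotient_succ_le_of_nonZeroDivisor hx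
  rw [hd] at this
  have h2 : ringKrullDim (R ⧸ Ideal.span {x}) + 1 ≤ 0 + 1 := by simpa using this
  rcases hq : ringKrullDim (R ⧸ Ideal.span {x}) with _ | _ | k
  · exact bot_le
  · rw [hq] at h2
    exact absurd h2 (by decide)
  · rw [hq] at h2
    have h3 : ((k + 1 : ℕ) : WithBot ℕ∞) ≤ ((0 + 1 : ℕ) : WithBot ℕ∞) := h2
    have h4 : k + 1 ≤ 0 + 1 := by exact_mod_cast h3
    have : k = 0 := by omega
    subst this
    exact le_rfl

noncomputable def fracMap (A A' : Type*) [CommRing A] [CommRing A'] [Algebra A A']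
    (h : nonZeroDivisors A ≤ (nonZeroDivisors A').comap (algebraMap A A')) :
    FractionRing A →ₐ[A] FractionRing A' :=
  IsLocalization.liftAlgHom (M := nonZeroDivisors A) (f := Algebra.ofId A (FractionRing A'))
    (by
      intro y
      have := IsLocalization.map_units (FractionRing A') (⟨_, h y.2⟩ : nonZeroDivisors A')
      rwa [← IsScalarTower.algebraMap_apply] at this)

theorem strict_map {A A' : Type*} [CommRing A] [CommRing A'] [Algebra A A']
    (h : nonZeroDivisors A ≤ (nonZeroDivisors A').comap (algebraMap A A')) {x : FractionRing A}
    (hx : x ∈ strictClosureSet A) : fracMap A A' h x ∈ strictClosureSet A' := by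
  obtain ⟨hxi, e⟩ := hx
  have hint : ∀ y ∈ integralClosure A (FractionRing A), fracMap A A' h y ∈ integralClosure A' (FractionRing A') := by
    intro y hy
    exact IsIntegral.tower_top (R := A) (IsIntegral.map (fracMap A A' h) hy)
  refine ⟨hint x hxi, ?_⟩
  let g : integralClosure A (FractionRing A) →ₗ[A] integralClosure A' (FractionRing A') :=
    { toFun := fun y => ⟨fracMap A A' h y, hint y y.2⟩
      map_add' := fun _ _ => Subtype.ext (map_add _ _ _)
      map_smul' := fun _ _ => Subtype.ext (map_smul _ _ _) }
  have g1 : g 1 = 1 := Subtype.ext (map_one (fracMap A A' h))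
  have e2 := congrArg (TensorProduct.map g g) e
  rw [TensorProduct.map_tmul, TensorProduct.map_tmul, g1] at e2
  exact congrArg (TensorProduct.mapOfCompatibleSMul A' A A _ _) e2

theorem dim_lt_two_aux {R : Type*} [CommRing R] [IsLocalRing R] {s u : R} (hs : s ∈ nonZeroDivisors R)
    (hu : ∀ v, u ≠ s * v) (hm : ∀ r ∈ IsLocalRing.maximalIdeal R, ∃ v, r * u = s * v) :
    ¬ RingDepthGE R 2 := by
  rintro ⟨xs, hlen, hmem, hreg⟩
  obtain ⟨x1, x2, rfl⟩ : ∃ x1 x2, xs = [x1, x2] := by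
    match xs, hlen with
    | [a, b], _ => exact ⟨a, b, rfl⟩
  have h1 := hreg 0 (by simp)
  have h2 := hreg 1 (by simp)
  have hset0 : {y : R | y ∈ List.take 0 [x1, x2]} = ∅ := by ext; simp
  rw [hset0, Ideal.span_empty] at h1
  simp only [List.get_eq_getElem, List.getElem_cons_zero] at h1
  have hset : {y : R | y ∈ List.take 1 [x1, x2]} = {x1} := by ext; simp
  rw [hset] at h2
  simp only [List.get_eq_getElem, List.getElem_cons_succ, List.getElem_cons_zero] at h2
  obtain ⟨v, hv⟩ := hm x1 (hmem x1 (by simp))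
  obtain ⟨w, hw⟩ := hm x2 (hmem x2 (by simp))
  have h1' : ∀ a b, x1 * a = x1 * b → a = b := by
    intro a b hab
    have : (Ideal.Quotient.mk (⊥ : Ideal R)) a = Ideal.Quotient.mk ⊥ b := by
      apply h1
      simp only [Algebra.smul_def, Ideal.Quotient.algebraMap_eq, ← map_mul, hab]
    rw [Ideal.Quotient.eq, Ideal.mem_bot] at this
    exact sub_eq_zero.1 this
  have h3 : x2 * v = x1 * w := by
    have h0 : (x2 * v - x1 * w) * s = 0 := by linear_combination x1 * hw - x2 * hv
    exact sub_eq_zero.1 ((mul_right_mem_nonZeroDivisors_eq_zero_iff hs).1 h0)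
  have h4 : (Ideal.Quotient.mk (Ideal.span {x1})) v = 0 := by
    apply h2
    simp only [Algebra.smul_def, Ideal.Quotient.algebraMap_eq, ← map_mul, h3, smul_zero]
    simp [Ideal.Quotient.eq_zero_iff_mem, Ideal.mem_span_singleton]
  rw [Ideal.Quotient.eq_zero_iff_mem, Ideal.mem_span_singleton] at h4
  obtain ⟨v', rfl⟩ := h4
  exact hu v' (h1' _ _ (by rw [hv]; ring))

theorem dim_ge_one_aux {R : Type*} [CommRing R] [IsLocalRing R] {s : R} (hs : s ∈ nonZeroDivisors R)
    (hm : s ∈ IsLocalRing.maximalIdeal R) : 1 ≤ ringKrullDim R := by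
  have h1 := ringKrullDim_quotient_succ_le_of_nonZeroDivisor hs
  haveI : Nontrivial (R ⧸ Ideal.span {s}) := Ideal.Quotient.nontrivial_iff.2 (by
    rw [Ne, Ideal.span_singleton_eq_top]
    exact hm)
  have h2 : (0 : WithBot ℕ∞) ≤ ringKrullDim (R ⧸ Ideal.span {s}) := ringKrullDim_nonneg_of_nontrivial
  refine le_trans ?_ h1
  calc (1 : WithBot ℕ∞) = 0 + 1 := by simp
    _ ≤ _ := add_le_add_left h2 1

theorem eq_one_of {d : WithBot ℕ∞} (h1 : 1 ≤ d) (h2 : ¬ (2 : ℕ) ≤ d) : d = 1 := by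
  rcases d with _ | _ | k
  · exact absurd (le_bot_iff.1 h1) (by simp)
  · exact absurd le_top h2
  · have h3 : ((1 : ℕ) : WithBot ℕ∞) ≤ ((k : ℕ) : WithBot ℕ∞) := h1
    have h4 : ¬ ((2 : ℕ) : WithBot ℕ∞) ≤ ((k : ℕ) : WithBot ℕ∞) := h2
    have h5 : 1 ≤ k := by exact_mod_cast h3
    have h6 : ¬ 2 ≤ k := by exact_mod_cast h4
    have : k = 1 := by omega
    subst this
    rfl

theorem strict_of_local (A : Type*) [CommRing A] [IsNoetherianRing A] (hS2 : SerreSCondition A 2)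
    (hA : ∀ (P : Ideal A) [P.IsPrime], ringKrullDim (Localization.AtPrime P) = 1 →
      IsStrictlyClosed (Localization.AtPrime P)) : IsStrictlyClosed A := by
  intro x hx
  obtain ⟨y, s, rfl⟩ := IsLocalization.exists_mk'_eq (nonZeroDivisors A) x
  by_cases hys : y ∈ Ideal.span {(s : A)}
  · obtain ⟨a, rfl⟩ := Ideal.mem_span_singleton.1 hys
    exact ⟨a, by rw [IsLocalization.eq_mk'_iff_mul_eq, ← map_mul, mul_comm]⟩
  exfalso
  have hy0 : (Ideal.Quotient.mk (Ideal.span {(s : A)}) y) ≠ 0 := by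
    rwa [Ne, Ideal.Quotient.eq_zero_iff_mem]
  obtain ⟨P, hP, hle⟩ := exists_le_isAssociatedPrime_of_isNoetherianRing A _ hy0
  obtain ⟨hPp, u, hu⟩ := (isAssociatedPrime_iff).1 hP
  obtain ⟨u, rfl⟩ := Ideal.Quotient.mk_surjective u
  have memann : ∀ (t z : A), t ∈ (⊥ : Submodule A (A ⧸ Ideal.span {(s : A)})).colon {Ideal.Quotient.mk (Ideal.span {(s : A)}) z} ↔ ∃ v, t * z = s * v := by
    intro t z
    rw [Submodule.mem_colon_singleton, Submodule.mem_bot, Algebra.smul_def, Ideal.Quotient.algebraMap_eq,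
      ← map_mul, Ideal.Quotient.eq_zero_iff_mem, Ideal.mem_span_singleton]
    rfl
  have memP : ∀ t, t ∈ P ↔ ∃ v, t * u = s * v := fun t => by rw [hu]; exact memann t u
  let R := Localization.AtPrime P
  have hnz : nonZeroDivisors A ≤ (nonZeroDivisors R).comap (algebraMap A R) :=
    IsLocalization.nonZeroDivisors_le_comap P.primeCompl R
  have hsR : algebraMap A R s ∈ nonZeroDivisors R := hnz s.2
  have hdiv : ∀ z : A, (∃ v : R, algebraMap A R z = algebraMap A R s * v) → ∃ t, t ∉ P ∧ ∃ v, t * z = s * v := by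
    rintro z ⟨v, hv⟩
    obtain ⟨v, t, rfl⟩ := IsLocalization.exists_mk'_eq P.primeCompl v
    rw [← IsLocalization.mk'_one (M := P.primeCompl) R z, ← IsLocalization.mk'_one (M := P.primeCompl) R (s : A), ← IsLocalization.mk'_mul, IsLocalization.mk'_eq_iff_eq,
      IsLocalization.eq_iff_exists P.primeCompl] at hv
    obtain ⟨c, hc⟩ := hv
    refine ⟨c * t, mul_mem c.2 t.2, c * v, ?_⟩
    simp only [Submonoid.coe_mul, Submonoid.coe_one, one_mul] at hc
    linear_combination hc
  have hsP : (s : A) ∈ P := (memP _).2 ⟨u, rfl⟩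
  have hge := dim_ge_one_aux hsR (by
    rw [← Localization.AtPrime.map_eq_maximalIdeal]
    exact Ideal.mem_map_of_mem _ hsP)
  have hlt : ¬ RingDepthGE R 2 := by
    refine dim_lt_two_aux (u := algebraMap A R u) hsR ?_ ?_
    · intro v hv
      obtain ⟨t, ht, w, hw⟩ := hdiv u ⟨v, hv⟩
      exact ht ((memP t).2 ⟨w, hw⟩)
    · intro r hr
      obtain ⟨r, t, rfl⟩ := IsLocalization.exists_mk'_eq P.primeCompl r
      have hr' : r ∈ P := (IsLocalization.AtPrime.mk'_mem_maximal_iff R P r t).1 hr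
      obtain ⟨v, hv⟩ := (memP r).1 hr'
      refine ⟨IsLocalization.mk' R v t, ?_⟩
      rw [IsLocalization.mul_mk'_eq_mk'_of_mul, mul_comm (IsLocalization.mk' R r t), IsLocalization.mul_mk'_eq_mk'_of_mul, mul_comm u, hv]
  have hd : ringKrullDim R = 1 := eq_one_of hge (fun h => hlt (hS2 P 2 le_rfl h))
  obtain ⟨v, hv⟩ := hA P hd _ (strict_map hnz hx)
  obtain ⟨t, ht, w, hw⟩ := hdiv y ⟨v, by
    apply IsFractionRing.injective R (FractionRing R)
    rw [map_mul, hv]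
    have e : algebraMap A (FractionRing A) s * IsLocalization.mk' (FractionRing A) y s = algebraMap A _ y := IsLocalization.mk'_spec' _ _ _
    have e2 := congrArg (fracMap A R hnz) e
    rw [map_mul, AlgHom.commutes, AlgHom.commutes] at e2
    rw [← IsScalarTower.algebraMap_apply, ← IsScalarTower.algebraMap_apply]
    exact e2.symm⟩
  exact ht (hle ((memann t y).2 ⟨w, hw⟩))

end

section
open scoped TensorProduct
set_option linter.style.haveILetI false

theorem weaklyArf_of_strict {A : Type*} [CommRing A] (h : IsStrictlyClosed A) : IsWeaklyArfRing A := by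
  intro x y z hx hp hq
  set p0 := IsLocalization.mk' (FractionRing A) y (⟨x, hx⟩ : nonZeroDivisors A) with hp0
  set q0 := IsLocalization.mk' (FractionRing A) z (⟨x, hx⟩ : nonZeroDivisors A) with hq0
  have ep : algebraMap A (FractionRing A) x * p0 = algebraMap A _ y := IsLocalization.mk'_spec' (FractionRing A) y (⟨x, hx⟩ : nonZeroDivisors A)
  have eq : algebraMap A (FractionRing A) x * q0 = algebraMap A _ z := IsLocalization.mk'_spec' (FractionRing A) z (⟨x, hx⟩ : nonZeroDivisors A)
  let p : integralClosure A (FractionRing A) := ⟨p0, hp⟩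
  let q : integralClosure A (FractionRing A) := ⟨q0, hq⟩
  have ep' : x • p = y • (1 : integralClosure A (FractionRing A)) := by
    apply Subtype.ext
    simp only [Subalgebra.coe_smul, Subalgebra.coe_one, Algebra.smul_def, mul_one]
    exact ep
  have eq' : x • q = z • (1 : integralClosure A (FractionRing A)) := by
    apply Subtype.ext
    simp only [Subalgebra.coe_smul, Subalgebra.coe_one, Algebra.smul_def, mul_one]
    exact eq
  have ew : z • p = y • q := by
    apply Subtype.ext
    change z • p0 = y • q0
    simp only [Algebra.smul_def, ← ep, ← eq]
    ring
  have hs : ((z • p : integralClosure A (FractionRing A)) : FractionRing A) ∈ strictClosureSet A := by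
    refine ⟨(z • p).2, ?_⟩
    change (z • p) ⊗ₜ[A] (1 : integralClosure A (FractionRing A)) = 1 ⊗ₜ[A] (z • p)
    rw [TensorProduct.smul_tmul, ← eq', ← TensorProduct.smul_tmul, ep', ew, TensorProduct.smul_tmul]
  obtain ⟨a, ha⟩ := h _ hs
  rw [Ideal.mem_span_singleton]
  refine ⟨a, IsFractionRing.injective A (FractionRing A) ?_⟩
  rw [map_mul, map_mul, ha]
  change _ = _ * (z • p0)
  rw [Algebra.smul_def, ← ep]; ring

theorem exists_nzd_clear {A : Type*} [CommRing A] [IsNoetherianRing A] (hS2 : SerreSCondition A 2)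
    (P : Ideal A) [P.IsPrime] (w : A) (hw : algebraMap A (Localization.AtPrime P) w ∈ nonZeroDivisors (Localization.AtPrime P)) :
    ∃ s ∈ nonZeroDivisors A, ∃ v : Localization.AtPrime P, algebraMap A (Localization.AtPrime P) s = algebraMap A _ w * v := by
  let R := Localization.AtPrime P
  let I' : Ideal A := (Ideal.span {algebraMap A R w}).comap (algebraMap A R)
  by_contra hcon
  push Not at hcon
  have hsub : (I' : Set A) ⊆ ⋃ p ∈ associatedPrimes A A, (p : Set A) := by
    rw [biUnion_associatedPrimes_eq_compl_nonZeroDivisors]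
    intro s hs hs0
    obtain ⟨v, hv⟩ := Ideal.mem_span_singleton.1 (Ideal.mem_comap.1 hs)
    exact hcon s hs0 v hv
  obtain ⟨p, hp, hle⟩ := (Ideal.subset_union_prime_finite (associatedPrimes.finite A A) (f := id) 0 0
    (fun p hp _ _ => hp.isPrime)).1 hsub
  change I' ≤ p at hle
  obtain ⟨hpp, v, hv⟩ := (isAssociatedPrime_iff).1 hp
  have memp : ∀ t, t ∈ p ↔ t * v = 0 := by
    intro t
    rw [hv, Submodule.mem_colon_singleton, Submodule.mem_bot, smul_eq_mul]
  by_cases hpP : p ≤ P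
  · have hwp : w ∈ p := hle (Ideal.mem_comap.2 (Ideal.mem_span_singleton_self _))
    have h1 := (memp w).1 hwp
    have h2 : algebraMap A R v = 0 := by
      have := congrArg (algebraMap A R) h1
      rw [map_mul, map_zero] at this
      exact (mul_left_mem_nonZeroDivisors_eq_zero_iff hw).1 this
    obtain ⟨c, hc⟩ := (IsLocalization.map_eq_zero_iff P.primeCompl R v).1 h2
    exact c.2 (hpP ((memp c).2 hc))
  · obtain ⟨t, htp, htP⟩ := Set.not_subset.1 hpP
    have hv0 : algebraMap A (Localization.AtPrime p) v ≠ 0 := by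
      intro h0
      obtain ⟨c, hc⟩ := (IsLocalization.map_eq_zero_iff p.primeCompl _ v).1 h0
      exact c.2 ((memp c).2 hc)
    have hdim : ¬ (1 : ℕ) ≤ ringKrullDim (Localization.AtPrime p) := by
      intro hd
      obtain ⟨xs, hlen, hmem, hreg⟩ := hS2 p 1 (by norm_num) hd
      obtain ⟨x1, rfl⟩ : ∃ x1, xs = [x1] := List.length_eq_one_iff.1 hlen
      have h1 := hreg 0 (by simp)
      have hset0 : {y | y ∈ List.take 0 [x1]} = ∅ := by ext; simp
      rw [hset0, Ideal.span_empty] at h1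
      simp only [List.get_eq_getElem, List.getElem_cons_zero] at h1
      obtain ⟨r, c, rfl⟩ := IsLocalization.exists_mk'_eq p.primeCompl x1
      have hr' : r ∈ p := (IsLocalization.AtPrime.mk'_mem_maximal_iff _ p r c).1 (hmem _ (by simp))
      apply hv0
      have : (Ideal.Quotient.mk (⊥ : Ideal (Localization.AtPrime p))) (algebraMap A _ v) = Ideal.Quotient.mk ⊥ 0 := by
        apply h1
        simp only [Algebra.smul_def, Ideal.Quotient.algebraMap_eq, ← map_mul]
        rw [mul_comm, IsLocalization.mul_mk'_eq_mk'_of_mul, mul_comm, (memp r).1 hr', IsLocalization.mk'_zero, mul_zero]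
      rw [Ideal.Quotient.eq, Ideal.mem_bot, sub_zero] at this
      exact this
    have hk : Ring.KrullDimLE 0 (Localization.AtPrime p) := by
      rw [Ring.krullDimLE_iff]
      by_contra hc
      apply hdim
      rcases hd : ringKrullDim (Localization.AtPrime p) with _ | _ | k
      · rw [hd] at hc; exact absurd bot_le hc
      · exact le_top
      · rw [hd] at hc
        have h3 : ¬ ((k : ℕ) : WithBot ℕ∞) ≤ ((0 : ℕ) : WithBot ℕ∞) := hc
        have h4 : ¬ k ≤ 0 := by exact_mod_cast h3
        have h5 : ((1 : ℕ) : WithBot ℕ∞) ≤ ((k : ℕ) : WithBot ℕ∞) := by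
          have : 1 ≤ k := by omega
          exact_mod_cast this
        exact h5
    have hnil : IsNilpotent (algebraMap A (Localization.AtPrime p) t) := by
      rw [← mem_nilradical, ← Ring.jacobson_eq_nilradical_of_krullDimLE_zero,
        IsLocalRing.ringJacobson_eq_maximalIdeal, ← Localization.AtPrime.map_eq_maximalIdeal]
      exact Ideal.mem_map_of_mem _ htp
    obtain ⟨k, hk⟩ := hnil
    rw [← map_pow] at hk
    obtain ⟨c, hc⟩ := (IsLocalization.map_eq_zero_iff p.primeCompl _ _).1 hk
    have : (c : A) ∈ I' := by
      rw [Ideal.mem_comap]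
      have : algebraMap A R c = 0 := by
        rw [IsLocalization.map_eq_zero_iff P.primeCompl R]
        exact ⟨⟨t ^ k, pow_mem (S := P.primeCompl) htP k⟩, by rw [mul_comm]; exact hc⟩
      rw [this]; exact zero_mem _
    exact c.2 (hle this)

end

section
open scoped TensorProduct
set_option linter.style.haveILetI false

theorem strict_localize {A : Type*} [CommRing A] [IsNoetherianRing A] (hS2 : SerreSCondition A 2)
    (h : IsStrictlyClosed A) (P : Ideal A) [P.IsPrime] : IsStrictlyClosed (Localization.AtPrime P) := by
  let R := Localization.AtPrime P
  let Q := FractionRing A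
  let Q' := FractionRing R
  have hnz : nonZeroDivisors A ≤ (nonZeroDivisors R).comap (algebraMap A R) :=
    IsLocalization.nonZeroDivisors_le_comap P.primeCompl R
  let f : Q →ₐ[A] Q' := fracMap A R hnz
  have hmk : ∀ (y : A) (s : nonZeroDivisors A),
      algebraMap A Q' s * f (IsLocalization.mk' Q y s) = algebraMap A Q' y := by
    intro y s
    have e : algebraMap A Q s * IsLocalization.mk' Q y s = algebraMap A _ y := IsLocalization.mk'_spec' _ _ _
    have e2 := congrArg f e
    rwa [map_mul, AlgHom.commutes, AlgHom.commutes] at e2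
  have hAR : ∀ a, algebraMap A Q' a = algebraMap R Q' (algebraMap A R a) := fun a =>
    IsScalarTower.algebraMap_apply _ _ _ _
  have hunit : ∀ t : P.primeCompl, IsUnit (algebraMap A Q' t) := by
    intro t
    rw [hAR]
    exact (IsLocalization.map_units R t).map _
  have hf0 : ∀ q, f q = 0 → ∃ t : P.primeCompl, algebraMap A Q t * q = 0 := by
    intro q hq
    obtain ⟨y, s, rfl⟩ := IsLocalization.exists_mk'_eq (nonZeroDivisors A) q
    have h1 := hmk y s
    rw [hq, mul_zero, hAR] at h1
    have h2 : algebraMap A R y = 0 := by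
      apply IsFractionRing.injective R Q'
      rw [← h1, map_zero]
    obtain ⟨c, hc⟩ := (IsLocalization.map_eq_zero_iff P.primeCompl R y).1 h2
    refine ⟨c, ?_⟩
    rw [IsLocalization.mul_mk'_eq_mk'_of_mul, hc, IsLocalization.mk'_zero]
  have hfs : ∀ z, ∃ (t : P.primeCompl) (q : Q), algebraMap A Q' t * z = f q := by
    intro z
    obtain ⟨y, w, rfl⟩ := IsLocalization.exists_mk'_eq (nonZeroDivisors R) z
    obtain ⟨⟨w0, t1⟩, hw⟩ := IsLocalization.surj P.primeCompl (w : R)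
    dsimp only at hw
    obtain ⟨s, hs, v, hv⟩ := exists_nzd_clear hS2 P w0 (by
      rw [← hw]
      exact mul_mem w.2 (IsUnit.mem_nonZeroDivisors (IsLocalization.map_units R t1)))
    obtain ⟨⟨y1, t2⟩, hy⟩ := IsLocalization.surj P.primeCompl (y * algebraMap A R t1 * v)
    dsimp only at hy
    refine ⟨t2, IsLocalization.mk' Q y1 ⟨s, hs⟩, ?_⟩
    have h1 := hmk y1 ⟨s, hs⟩
    have hsu : IsUnit (algebraMap A Q' s) := by
      rw [hAR]
      exact IsLocalization.map_units Q' (⟨_, hnz hs⟩ : nonZeroDivisors R)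
    apply hsu.mul_left_cancel
    rw [h1]
    have e1 : algebraMap R Q' w * IsLocalization.mk' Q' y w = algebraMap R Q' y := IsLocalization.mk'_spec' _ _ _
    have e2 : algebraMap A Q' s = algebraMap R Q' w * algebraMap R Q' (algebraMap A R t1) * algebraMap R Q' v := by
      rw [hAR, hv, ← hw, map_mul, map_mul]
    have e3 : algebraMap R Q' y * algebraMap R Q' (algebraMap A R t1) * algebraMap R Q' v * algebraMap A Q' t2 = algebraMap A Q' y1 := by
      rw [hAR, hAR, ← hy, map_mul, map_mul, map_mul]
    rw [e2, ← e3, ← e1]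
    ring
  letI : Algebra Q Q' := f.toRingHom.toAlgebra
  have hfalg : ∀ q, algebraMap Q Q' q = f q := fun _ => rfl
  haveI : IsScalarTower A Q Q' := IsScalarTower.of_algebraMap_eq (fun a => by rw [hfalg, AlgHom.commutes])
  haveI : IsLocalization (Algebra.algebraMapSubmonoid Q P.primeCompl) Q' := by
    refine ⟨⟨?_, ?_, ?_⟩⟩
    · rintro ⟨_, t, ht, rfl⟩
      rw [hfalg, AlgHom.commutes]
      exact hunit ⟨t, ht⟩
    · intro z
      obtain ⟨t, q, hq⟩ := hfs z
      refine ⟨⟨q, _, t, t.2, rfl⟩, ?_⟩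
      rw [hfalg, hfalg, ← hq, AlgHom.commutes, mul_comm]
    · intro a b hab
      rw [hfalg, hfalg] at hab
      obtain ⟨t, ht⟩ := hf0 (a - b) (by rw [map_sub, hab, sub_self])
      refine ⟨⟨_, t, t.2, rfl⟩, ?_⟩
      rwa [mul_sub, sub_eq_zero] at ht
  have hint : ∀ y ∈ integralClosure A Q, f y ∈ integralClosure R Q' := by
    intro y hy
    exact IsIntegral.tower_top (R := A) (IsIntegral.map f hy)
  let g : integralClosure A Q →ₗ[A] integralClosure R Q' :=
    { toFun := fun y => ⟨f y, hint y y.2⟩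
      map_add' := fun _ _ => Subtype.ext (map_add _ _ _)
      map_smul' := fun _ _ => Subtype.ext (map_smul _ _ _) }
  have g1 : g 1 = 1 := Subtype.ext (map_one f)
  haveI hg : IsLocalizedModule P.primeCompl g := by
    refine ⟨?_, ?_, ?_⟩
    · intro t
      rw [Module.End.isUnit_iff]
      obtain ⟨u, hu⟩ := IsLocalization.map_units R t
      have hb := MulAction.bijective (β := integralClosure R Q') u
      convert hb using 1
      ext y : 1
      rw [Module.algebraMap_end_apply, Units.smul_def, hu, algebraMap_smul]
    · rintro ⟨s, hs⟩
      obtain ⟨t, x, e⟩ := hfs s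
      obtain ⟨m2, hm2s⟩ := IsIntegral.exists_multiple_integral_of_isLocalization P.primeCompl _ hs
      obtain ⟨m3, hm3, hm3s⟩ := IsLocalization.exists_isIntegral_smul_of_isIntegral_map (Sₘ := Q')
        P.primeCompl (x := (m2 : A) • x) (by
          have : algebraMap Q Q' ((m2 : A) • x) = algebraMap A Q' t * (m2 • s) := by
            rw [hfalg, map_smul, ← e, Submonoid.smul_def, mul_smul_comm]
          rw [this]
          exact isIntegral_algebraMap.mul hm2s)
      refine ⟨⟨⟨_, hm3s⟩, ⟨m3, hm3⟩ * m2 * t⟩, ?_⟩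
      apply Subtype.ext
      change ((m3 * m2 * t : A)) • s = f (m3 • (m2 : A) • x)
      rw [map_smul, map_smul, ← e]
      simp only [Algebra.smul_def, map_mul]
      ring
    · intro a b hab
      have : f (a - b) = 0 := by
        rw [map_sub, sub_eq_zero]; exact congrArg Subtype.val hab
      obtain ⟨t, ht⟩ := hf0 _ this
      refine ⟨t, ?_⟩
      apply Subtype.ext
      change (t : A) • (a : Q) = (t : A) • (b : Q)
      rw [← sub_eq_zero, ← smul_sub, Algebra.smul_def]; exact ht
  rintro x ⟨hxi, hx⟩
  obtain ⟨⟨c, t⟩, hc⟩ := IsLocalizedModule.surj P.primeCompl g ⟨x, hxi⟩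
  dsimp only at hc
  have hx' : (⟨x, hxi⟩ : integralClosure R Q') ⊗ₜ[A] (1 : integralClosure R Q') = 1 ⊗ₜ[A] (⟨x, hxi⟩ : integralClosure R Q') :=
    congrArg (TensorProduct.mapOfCompatibleSMul A R R _ _) hx
  have hcc : TensorProduct.map g g (c ⊗ₜ 1) = TensorProduct.map g g (1 ⊗ₜ c) := by
    rw [TensorProduct.map_tmul, TensorProduct.map_tmul, g1, ← hc, Submonoid.smul_def, ← TensorProduct.smul_tmul', hx', TensorProduct.tmul_smul]
  obtain ⟨d, hd⟩ := IsLocalizedModule.exists_of_eq (S := P.primeCompl) hcc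
  obtain ⟨a, ha⟩ := h ((d • c : integralClosure A Q) : Q) ⟨(d • c).2, by
    change (d • c) ⊗ₜ[A] (1 : integralClosure A Q) = 1 ⊗ₜ[A] (d • c)
    rw [Submonoid.smul_def] at hd ⊢
    rw [← TensorProduct.smul_tmul', TensorProduct.tmul_smul]
    exact hd⟩
  have e1 : algebraMap A Q' (d * t) * x = algebraMap A Q' a := by
    have h1 := congrArg f ha
    rw [AlgHom.commutes] at h1
    rw [h1]
    have h2 : f c = (t : A) • x := (congrArg Subtype.val hc).symm
    change _ = f ((d : A) • (c : Q))
    rw [map_smul, h2, map_mul, Algebra.smul_def, Algebra.smul_def, mul_assoc]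
  refine ⟨IsLocalization.mk' R a (d * t), ?_⟩
  apply (hunit (d * t)).mul_left_cancel
  have e3 : algebraMap A R (d * t) * IsLocalization.mk' R a (d * t) = algebraMap A R a := IsLocalization.mk'_spec' R a (d * t)
  rw [hAR, ← map_mul]
  change algebraMap R Q' (algebraMap A R (d * t) * IsLocalization.mk' R a (d * t)) = _
  rw [e3, ← hAR, ← e1]
  exact congrArg (· * x) (hAR _)

end

section
open Polynomial
set_option linter.style.haveILetI false

theorem exists_rel {R : Type*} [CommRing R] [IsLocalRing R] [IsNoetherianRing R]
    (hd : ringKrullDim R = 1) {x : R} (hxm : x ∈ IsLocalRing.maximalIdeal R) (hx : x ∈ nonZeroDivisors R)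
    (q : FractionRing R) : ∃ p : R[X], aeval q p = 0 ∧ ∃ j, p.coeff j = 1 := by
  by_contra hcon
  push Not at hcon
  let φ : R[X] →+* FractionRing R := (aeval (R := R) q).toRingHom
  have hm : ∀ p, φ p = 0 → p.map (IsLocalRing.residue R) = 0 := by
    intro p hp
    ext j
    rw [coeff_map, coeff_zero, IsLocalRing.residue_eq_zero_iff]
    by_contra hu
    rw [IsLocalRing.mem_maximalIdeal, mem_nonunits_iff, not_not] at hu
    obtain ⟨u, hu⟩ := hu
    refine hcon (C (↑u⁻¹ : R) * p) ?_ j ?_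
    · rw [map_mul]
      change _ * φ p = 0
      rw [hp, mul_zero]
    · rw [coeff_C_mul, ← hu, Units.inv_mul]
  obtain ⟨y, c, rfl⟩ := IsLocalization.exists_mk'_eq (nonZeroDivisors R) q
  set q := IsLocalization.mk' (FractionRing R) y c with hq
  let f : R[X] := C (c : R) * X - C y
  have hf0 : φ f = 0 := by
    change aeval q f = 0
    simp only [f, map_sub, map_mul, aeval_X, aeval_C]
    rw [sub_eq_zero]
    exact IsLocalization.mk'_spec' (FractionRing R) y c
  have hfn : f ∈ nonZeroDivisors R[X] := by
    apply Polynomial.mem_nonzeroDivisors_of_coeff_mem (n := 1)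
    simp [f, coeff_C]
  let B := R[X] ⧸ RingHom.ker φ
  let xB : B := Ideal.Quotient.mk _ (C x)
  have hxB : xB ∈ nonZeroDivisors B := by
    rw [mem_nonZeroDivisors_iff_right]
    intro z hz
    obtain ⟨p, rfl⟩ := Ideal.Quotient.mk_surjective z
    rw [← map_mul, Ideal.Quotient.eq_zero_iff_mem, RingHom.mem_ker, map_mul] at hz
    rw [Ideal.Quotient.eq_zero_iff_mem, RingHom.mem_ker]
    have hu : IsUnit (φ (C x)) := by
      have : φ (C x) = algebraMap R (FractionRing R) x := aeval_C _ _
      rw [this]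
      exact IsLocalization.map_units (FractionRing R) (⟨x, hx⟩ : nonZeroDivisors R)
    exact hu.mul_left_eq_zero.1 hz
  have d1 : ringKrullDim R[X] = 1 + 1 := by
    rw [Polynomial.ringKrullDim_of_isNoetherianRing, hd]
  have d2 := ringKrullDim_quotient_succ_le_of_nonZeroDivisor hfn
  have d3 : ringKrullDim B ≤ ringKrullDim (R[X] ⧸ Ideal.span {f}) := by
    refine ringKrullDim_le_of_surjective (Ideal.Quotient.factor (S := Ideal.span {f}) (T := RingHom.ker φ) ?_) (Ideal.Quotient.factor_surjective _)
    rw [Ideal.span_singleton_le_iff_mem]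
    exact hf0
  have d4 := ringKrullDim_quotient_succ_le_of_nonZeroDivisor hxB
  have d5 : ringKrullDim (IsLocalRing.ResidueField R)[X] ≤ ringKrullDim (B ⧸ Ideal.span {xB}) := by
    let ψ : B →+* (IsLocalRing.ResidueField R)[X] := Ideal.Quotient.lift _ (mapRingHom (IsLocalRing.residue R)) hm
    have hψ : ∀ p, ψ (Ideal.Quotient.mk _ p) = p.map (IsLocalRing.residue R) := fun p => rfl
    refine ringKrullDim_le_of_surjective (Ideal.Quotient.lift _ ψ ?_) ?_
    · intro z hz
      obtain ⟨w, rfl⟩ := Ideal.mem_span_singleton.1 hz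
      rw [map_mul, hψ, Polynomial.map_C, (IsLocalRing.residue_eq_zero_iff x).2 hxm, C_0, zero_mul]
    · intro p
      obtain ⟨p, rfl⟩ := Polynomial.map_surjective _ IsLocalRing.residue_surjective p
      exact ⟨Ideal.Quotient.mk _ (Ideal.Quotient.mk _ p), rfl⟩
  have d6 : ringKrullDim (IsLocalRing.ResidueField R)[X] = 0 + 1 := by
    rw [Polynomial.ringKrullDim_of_isNoetherianRing, ringKrullDim_eq_zero_of_field]
  have : (3 : WithBot ℕ∞) ≤ 2 := by
    calc (3 : WithBot ℕ∞) = 0 + 1 + 1 + 1 := by norm_num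
      _ ≤ ringKrullDim R[X] := by
        rw [← d6]
        refine le_trans ?_ d2
        gcongr
        refine le_trans ?_ d3
        refine le_trans ?_ d4
        gcongr
      _ = 2 := by rw [d1]; norm_num
  exact absurd this (by decide)

end

section
open Polynomial
set_option linter.style.haveILetI false

theorem int_seq {R Q : Type*} [CommRing R] [CommRing Q] [Algebra R Q] (q : Q) (b : ℕ → Q) (r : ℕ → R)
    (n : ℕ) (hn : 0 < n) (h0 : b 0 = 0) (hs : ∀ i, b i = algebraMap R Q (r i) + q * b (i + 1))
    (hbn : ∀ i, n < i → b i = 0) (i : ℕ) : IsIntegral R (b i) := by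
  let N : Submodule R Q := Submodule.span R ((fun k => q ^ k) '' (Set.Iio n))
  have hmem : ∀ k, k < n → q ^ k ∈ N := fun k hk => Submodule.subset_span ⟨k, hk, rfl⟩
  have hN : N.FG := Submodule.fg_span ((Set.finite_Iio n).image _)
  have h1 : ∀ i k, i ≤ k → k < n → b i * q ^ k ∈ N := by
    intro i
    induction i with
    | zero => intro k _ _; rw [h0, zero_mul]; exact zero_mem _
    | succ i ih =>
      intro k hik hk
      obtain ⟨k, rfl⟩ : ∃ k', k = k' + 1 := ⟨k - 1, by omega⟩
      have e : b (i + 1) * q ^ (k + 1) = b i * q ^ k - (r i) • q ^ k := by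
        rw [hs i, Algebra.smul_def]; ring
      rw [e]
      exact sub_mem (ih k (by omega) (by omega)) (N.smul_mem _ (hmem k (by omega)))
  have h2 : ∀ d i k, n < i + d → k < i → k < n → b i * q ^ k ∈ N := by
    intro d
    induction d with
    | zero => intro i k hi _ _; rw [hbn i (by omega), zero_mul]; exact zero_mem _
    | succ d ih =>
      intro i k hi hki hk
      by_cases hin : n < i
      · rw [hbn i hin, zero_mul]; exact zero_mem _
      by_cases hk1 : k + 1 < n
      · have e : b i * q ^ k = (r i) • q ^ k + b (i + 1) * q ^ (k + 1) := by
          rw [hs i, Algebra.smul_def]; ring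
        rw [e]
        exact add_mem (N.smul_mem _ (hmem k hk)) (ih (i + 1) (k + 1) (by omega) (by omega) hk1)
      · have : i = n := by omega
        rw [hs i, hbn (i + 1) (by omega), mul_zero, add_zero, ← Algebra.smul_def]
        exact N.smul_mem _ (hmem k hk)
  refine integral_of_stab hN 1 (by simpa using hmem 0 hn) (one_mem _) (b i) ?_
  intro y hy
  induction hy using Submodule.span_induction with
  | mem y hy =>
    obtain ⟨k, hk, rfl⟩ := hy
    rcases lt_or_ge k i with h | h
    · exact h2 (n + 1) i k (by omega) h hk
    · exact h1 i k h hk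
  | zero => rw [mul_zero]; exact zero_mem _
  | add y z _ _ hy hz => rw [mul_add]; exact add_mem hy hz
  | smul a y _ hy => rw [mul_smul_comm]; exact N.smul_mem _ hy

theorem inv_pair {R Q : Type*} [CommRing R] [CommRing Q] [Algebra R Q] (q : Q) (p : R[X])
    (hp : aeval q p = 0) (j : ℕ) (hj : p.coeff j = 1) :
    ∃ u v : Q, IsIntegral R u ∧ IsIntegral R (u * q) ∧ IsIntegral R v ∧ IsIntegral R (v * q) ∧ u + v * q = 1 := by
  let b : ℕ → Q := fun i => aeval q (divX^[i] p)
  have hc : ∀ i k, (divX^[i] p).coeff k = p.coeff (k + i) := by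
    intro i
    induction i with
    | zero => intro k; rfl
    | succ i ih => intro k; rw [Function.iterate_succ_apply', coeff_divX, ih]; congr 1; ring
  have hs : ∀ i, b i = algebraMap R Q (p.coeff i) + q * b (i + 1) := by
    intro i
    change aeval q (divX^[i] p) = _ + q * aeval q (divX^[i + 1] p)
    rw [Function.iterate_succ_apply']
    conv_lhs => rw [← divX_mul_X_add (divX^[i] p)]
    rw [map_add, map_mul, aeval_X, aeval_C, hc, zero_add]; ring
  have hbn : ∀ i, p.natDegree + 1 < i → b i = 0 := by
    intro i hi
    have : divX^[i] p = 0 := by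
      ext k
      rw [hc, coeff_zero]
      exact coeff_eq_zero_of_natDegree_lt (by omega)
    change aeval q (divX^[i] p) = _
    rw [this, map_zero]
  have hint := int_seq q b p.coeff (p.natDegree + 1) (by omega) hp hs hbn
  have hintq : ∀ i, IsIntegral R (b i * q) := by
    intro i
    cases i with
    | zero => have : b 0 = 0 := hp
              rw [this, zero_mul]; exact isIntegral_zero
    | succ i =>
      have : b (i + 1) * q = b i - algebraMap R Q (p.coeff i) := by rw [hs i]; ring
      rw [this]
      exact (hint i).sub isIntegral_algebraMap
  refine ⟨b j, - b (j + 1), hint j, hintq j, (hint _).neg, ?_, ?_⟩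
  · rw [neg_mul]; exact (hintq _).neg
  · rw [hs j, hj, map_one]; ring

/-- Fitting-type idempotent modulo `b`. -/
theorem idem_mod {R C : Type*} [CommRing R] [CommRing C] [Algebra R C] [Module.Finite R C] (b : R)
    [IsArtinianRing (R ⧸ Ideal.span {b})] (t : C) :
    ∃ (n : ℕ) (g d : C), 0 < n ∧ t ^ n * (1 - t ^ n * g) = algebraMap R C b * d := by
  let D := C ⧸ (Ideal.span {b}).map (algebraMap R C)
  haveI : Module.Finite (R ⧸ Ideal.span {b}) D := by
    haveI : Module.Finite R D := Module.Finite.of_surjective (IsScalarTower.toAlgHom R C D).toLinearMap Ideal.Quotient.mk_surjective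
    exact Module.Finite.of_restrictScalars_finite R _ _
  haveI : IsArtinianRing D := IsArtinianRing.of_finite (R ⧸ Ideal.span {b}) D
  obtain ⟨n, y, hy⟩ := IsArtinian.exists_pow_succ_smul_dvd (Ideal.Quotient.mk _ t : D) (1 : D)
  have key : ∀ k, (Ideal.Quotient.mk _ t : D) ^ (n + 1) * ((Ideal.Quotient.mk _ t : D) ^ k * y ^ k) = (Ideal.Quotient.mk _ t : D) ^ (n + 1) := by
    intro k
    induction k with
    | zero => simp
    | succ k ih =>
      simp only [smul_eq_mul, Nat.succ_eq_add_one, mul_one] at hy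
      conv_rhs => rw [← ih]
      conv_rhs => rw [pow_succ, ← hy]
      ring
  obtain ⟨g, hg⟩ := Ideal.Quotient.mk_surjective (y ^ (n + 1))
  have h2 := key (n + 1)
  rw [← hg, ← map_pow, ← map_mul, ← map_mul, eq_comm, Ideal.Quotient.mk_eq_mk_iff_sub_mem, Ideal.map_span, Set.image_singleton, Ideal.mem_span_singleton] at h2
  obtain ⟨d, hd⟩ := h2
  exact ⟨n + 1, g, d, by omega, by rw [← hd]; ring⟩

end

section
open Polynomial
set_option linter.style.haveILetI false

theorem unit_alg {D : Type*} [CommRing D] {u g z E k S : D} (hE : u * k * g = E) (hz : u * k * (1 - E) = 0)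
    (hS : (1 - u) * S = 1 - u * k) :
    (E * E * u + E * (1 - E) * z + (1 - E) * (1 - E) * (1 - u)) * (E * k * g + (1 - E) * S) = 1 := by
  have h1 : E * (1 - E) = 0 := by
    calc E * (1 - E) = g * (u * k * (1 - E)) := by rw [← hE]; ring
      _ = 0 := by rw [hz, mul_zero]
  have h2 : E * E = E := by linear_combination -h1
  have h3 : (1 - E) * (1 - E) = 1 - E := by linear_combination -h1
  rw [h1, h2, h3]
  calc _ = E * E * (u * k * g) + E * (1 - E) * (u * S + (1 - u) * k * g) + ((1 - E) * (1 - E)) * ((1 - u) * S) := by ring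
    _ = E + (1 - E) - u * k * (1 - E) := by rw [h1, h3, hS, hE, h2, h2]; ring
    _ = 1 := by rw [hz]; ring

theorem exists_b {R : Type*} [CommRing R] (C : Subalgebra R (FractionRing R)) [Module.Finite R C]
    {m : Ideal R} {x : R} (hxm : x ∈ m) (hx : x ∈ nonZeroDivisors R) :
    ∃ b ∈ nonZeroDivisors R, ∀ d : C, ∃ r ∈ m, algebraMap R C r = algebraMap R C b * d := by
  obtain ⟨c, hc, h⟩ := exists_denom (N := Subalgebra.toSubmodule C) (Module.Finite.iff_fg.1 ‹_›)
  refine ⟨x * c, mul_mem hx hc, fun d => ?_⟩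
  obtain ⟨r, hr⟩ := h d d.2
  refine ⟨x * r, Ideal.mul_mem_right _ _ hxm, ?_⟩
  apply Subtype.ext
  change algebraMap R (FractionRing R) (x * r) = algebraMap R (FractionRing R) (x * c) * d
  rw [map_mul, map_mul, hr, mul_assoc]

theorem isUnit_of_mod {R C : Type*} [CommRing R] [IsLocalRing R] [CommRing C] [Algebra R C] {b : R}
    (hb : ∀ d : C, ∃ r ∈ IsLocalRing.maximalIdeal R, algebraMap R C r = algebraMap R C b * d)
    {t y d : C} (h : t * y = 1 - algebraMap R C b * d) : IsUnit t := by
  obtain ⟨r, hr, e⟩ := hb d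
  rw [← e, ← map_one (algebraMap R C), ← map_sub] at h
  have : IsUnit (algebraMap R C (1 - r)) := by
    refine IsUnit.map _ ?_
    by_contra hu
    have h1 : (1 - r) ∈ IsLocalRing.maximalIdeal R := hu
    have h2 := add_mem h1 hr
    rw [sub_add_cancel] at h2
    exact (Ideal.ne_top_iff_one _).1 (IsLocalRing.maximalIdeal.isMaximal R).ne_top h2
  rw [← h] at this
  exact isUnit_of_mul_isUnit_left this

theorem unit_C {R C : Type*} [CommRing R] [IsLocalRing R] [CommRing C] [Algebra R C] [Module.Finite R C] (b : R)
    [IsArtinianRing (R ⧸ Ideal.span {b})]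
    (hb : ∀ d : C, ∃ r ∈ IsLocalRing.maximalIdeal R, algebraMap R C r = algebraMap R C b * d) (U : C) :
    ∃ E : C, ∀ Z : C, IsUnit (E * E * U + E * (1 - E) * Z + (1 - E) * (1 - E) * (1 - U)) := by
  obtain ⟨n, g, d, hn, hnd⟩ := idem_mod b U
  obtain ⟨n, rfl⟩ : ∃ k, n = k + 1 := ⟨n - 1, by omega⟩
  obtain ⟨E, hE⟩ : ∃ E, E = U ^ (n + 1) * g := ⟨_, rfl⟩
  rw [← hE] at hnd
  refine ⟨E, fun Z => ?_⟩
  obtain ⟨S, hS⟩ : ∃ S : C, S = ∑ i ∈ Finset.range (n + 1), U ^ i := ⟨_, rfl⟩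
  let π := Ideal.Quotient.mk (Ideal.span {algebraMap R C b})
  have this : π ((E * E * U + E * (1 - E) * Z + (1 - E) * (1 - E) * (1 - U)) * (E * U ^ n * g + (1 - E) * S)) = π 1 := by
    simp only [map_add, map_mul, map_sub, map_one]
    refine unit_alg ?_ ?_ ?_
    · rw [← map_mul, ← map_mul, hE]; congr 1; ring
    · rw [← map_mul, ← map_one π, ← map_sub, ← map_mul]
      have : U * U ^ n * (1 - E) = algebraMap R C b * d := by rw [← hnd]; ring
      rw [this]
      exact Ideal.Quotient.eq_zero_iff_mem.2 (Ideal.mem_span_singleton.2 ⟨d, rfl⟩)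
    · rw [← map_mul, ← map_one π, ← map_sub, ← map_mul, ← map_sub]
      congr 1
      rw [hS, mul_neg_geom_sum]; ring
  rw [Ideal.Quotient.mk_eq_mk_iff_sub_mem, Ideal.mem_span_singleton] at this
  obtain ⟨d', hd'⟩ := this
  exact isUnit_of_mod hb (y := E * U ^ n * g + (1 - E) * S) (d := -d') (by linear_combination hd')

theorem principal_step {R : Type*} [CommRing R] [IsLocalRing R] [IsNoetherianRing R]
    (hd : ringKrullDim R = 1) {x : R} (hxm : x ∈ IsLocalRing.maximalIdeal R) (hx : x ∈ nonZeroDivisors R)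
    (q : FractionRing R) : ∃ C : Subalgebra R (FractionRing R), Module.Finite R C ∧
      ∃ β γ δ e₁ e₂ : FractionRing R, γ ∈ C ∧ δ ∈ C ∧ e₁ ∈ C ∧ e₂ ∈ C ∧ β * γ = 1 ∧ q = β * δ ∧
        β = e₁ + e₂ * q := by
  obtain ⟨p, hp, j, hj⟩ := exists_rel hd hxm hx q
  obtain ⟨u, v, hu, huq, hv, hvq, huv⟩ := inv_pair q p hp j hj
  let C : Subalgebra R (FractionRing R) := Algebra.adjoin R {u, u * q, v, v * q}
  have hmem : ∀ z ∈ ({u, u * q, v, v * q} : Set (FractionRing R)), z ∈ C := fun z hz => Algebra.subset_adjoin hz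
  haveI hC : Module.Finite R C := by
    refine Module.Finite.iff_fg.2 (fg_adjoin_of_finite (R := R) (s := {u, u * q, v, v * q}) (Set.toFinite _) ?_)
    rintro z (rfl | rfl | rfl | rfl) <;> assumption
  obtain ⟨b, hb0, hb⟩ := exists_b C hxm hx
  haveI := art_of_dim_one hd b hb0
  let U : C := ⟨u, hmem u (by simp)⟩
  let Uq : C := ⟨u * q, hmem _ (by simp)⟩
  let V : C := ⟨v, hmem v (by simp)⟩
  let Vq : C := ⟨v * q, hmem _ (by simp)⟩
  have hUV : U + Vq = 1 := Subtype.ext huv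
  obtain ⟨E, hE⟩ := unit_C b hb U
  have hw0 := hE (V + Uq)
  have hVq : 1 - U = Vq := by rw [← hUV]; ring
  rw [hVq] at hw0
  obtain ⟨w, hwe⟩ : ∃ w, w = E * E * U + E * (1 - E) * (V + Uq) + (1 - E) * (1 - E) * Vq := ⟨_, rfl⟩
  have hw : IsUnit w := by rw [hwe]; exact hw0
  obtain ⟨W, hW⟩ := hw
  let W' : C := ((W⁻¹ : Cˣ) : C)
  have hWW : w * W' = 1 := by rw [← hW]; exact Units.mul_inv W
  let β : FractionRing R := (E : FractionRing R) + (1 - E : C) * q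
  let γ0 : C := E * U + (1 - E) * V
  let δ0 : C := E * Uq + (1 - E) * Vq
  have hE1 : ((1 - E : C) : FractionRing R) = 1 - (E : FractionRing R) := rfl
  have hγ : β * γ0 = w := by
    simp only [hwe, β, γ0, U, V, Uq, Vq, Subalgebra.coe_add, Subalgebra.coe_mul, hE1]; ring
  have hγδ : (γ0 : FractionRing R) * q = δ0 := by
    simp only [γ0, δ0, U, V, Uq, Vq, Subalgebra.coe_add, Subalgebra.coe_mul, hE1]; ring
  have hWW' : (w : FractionRing R) * W' = 1 := congrArg Subtype.val hWW
  refine ⟨C, hC, β, (γ0 * W' : C), (δ0 * W' : C), E, (1 - E : C), (γ0 * W').2, (δ0 * W').2, E.2, (1 - E).2, ?_, ?_, rfl⟩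
  · rw [Subalgebra.coe_mul, ← mul_assoc, hγ, hWW']
  · rw [Subalgebra.coe_mul, ← hγδ]
    calc q = q * (w * W') := by rw [hWW', mul_one]
      _ = _ := by rw [← hγ]; ring

end

section
set_option linter.style.haveILetI false

theorem exists_C_aux {R : Type*} [CommRing R] [IsLocalRing R] [IsNoetherianRing R]
    (hd : ringKrullDim R = 1) {I : Ideal R} {x : R} (hxI : x ∈ I) (hxm : x ∈ IsLocalRing.maximalIdeal R)
    (hx : x ∈ nonZeroDivisors R) (T : Finset R) (hT : ∀ y ∈ T, y ∈ I) :
    ∃ C : Subalgebra R (FractionRing R), Module.Finite R C ∧ ∃ α : FractionRing R, IsUnit α ∧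
      (∀ y ∈ T, ∃ s ∈ C, algebraMap R (FractionRing R) y = α * s) ∧
      α ∈ Submodule.map (Algebra.linearMap R (FractionRing R)) I * Subalgebra.toSubmodule C := by
  classical
  induction T using Finset.induction_on with
  | empty =>
    refine ⟨⊥, inferInstance, algebraMap R _ x, IsLocalization.map_units (FractionRing R) (⟨x, hx⟩ : nonZeroDivisors R), by simp, ?_⟩
    rw [← mul_one (algebraMap R _ x)]
    exact Submodule.mul_mem_mul ⟨x, hxI, rfl⟩ (one_mem (⊥ : Subalgebra R (FractionRing R)))
  | insert y T hyT ih =>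
    obtain ⟨C, hC, α, ⟨a, rfl⟩, h1, h2⟩ := ih (fun z hz => hT z (Finset.mem_insert_of_mem hz))
    obtain ⟨C1, hC1, β, γ, δ, e₁, e₂, hγ, hδ, he1, he2, hβγ, hq, hβ⟩ :=
      principal_step hd hxm hx ((a⁻¹ : (FractionRing R)ˣ) * algebraMap R _ y)
    have hαq : (a : FractionRing R) * ((a⁻¹ : (FractionRing R)ˣ) * algebraMap R _ y) = algebraMap R _ y := by
      rw [← mul_assoc, Units.mul_inv, one_mul]
    have l1 : C ≤ C ⊔ C1 := le_sup_left
    have l2 : C1 ≤ C ⊔ C1 := le_sup_right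
    refine ⟨C ⊔ C1, Subalgebra.finite_sup C C1, a * β, a.isUnit.mul (IsUnit.of_mul_eq_one _ hβγ), ?_, ?_⟩
    · intro z hz
      rcases Finset.mem_insert.1 hz with rfl | hz
      · exact ⟨δ, l2 hδ, by rw [mul_assoc, ← hq, hαq]⟩
      · obtain ⟨s, hs, e⟩ := h1 z hz
        refine ⟨γ * s, mul_mem (l2 hγ) (l1 hs), ?_⟩
        rw [e]
        calc (a : FractionRing R) * s = a * (β * γ) * s := by rw [hβγ, mul_one]
          _ = _ := by ring
    · have e : (a : FractionRing R) * β = a * e₁ + algebraMap R _ y * e₂ := by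
        rw [← hαq]; nth_rewrite 1 [hβ]; ring
      rw [e]
      refine add_mem ?_ (Submodule.mul_mem_mul ⟨y, hT y (Finset.mem_insert_self _ _), rfl⟩ (l2 he2))
      have h3 := Submodule.mul_mem_mul h2 (show e₁ ∈ Subalgebra.toSubmodule C1 from he1)
      rw [mul_assoc] at h3
      have h4 : Subalgebra.toSubmodule C * Subalgebra.toSubmodule C1 ≤ Subalgebra.toSubmodule (C ⊔ C1) := by
        rw [Submodule.mul_le]
        intro c hc c' hc'
        exact (C ⊔ C1).mul_mem (l1 hc) (l2 hc')
      exact mul_le_mul' le_rfl h4 h3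

theorem exists_C {R : Type*} [CommRing R] [IsLocalRing R] [IsNoetherianRing R]
    (hd : ringKrullDim R = 1) {I : Ideal R} {x : R} (hxI : x ∈ I) (hxm : x ∈ IsLocalRing.maximalIdeal R)
    (hx : x ∈ nonZeroDivisors R) :
    ∃ C : Subalgebra R (FractionRing R), Module.Finite R C ∧ ∃ α : C, IsUnit (α : FractionRing R) ∧
      I.map (algebraMap R C) = Ideal.span {α} := by
  obtain ⟨T, hT⟩ := (isNoetherianRing_iff_ideal_fg R).1 ‹_› I
  obtain ⟨C, hC, α, hα, h1, h2⟩ := exists_C_aux hd hxI hxm hx T (fun y hy => hT ▸ Ideal.subset_span hy)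
  have key : ∀ w, w ∈ Submodule.map (Algebra.linearMap R (FractionRing R)) I * Subalgebra.toSubmodule C →
      ∃ hw : w ∈ C, (⟨w, hw⟩ : C) ∈ I.map (algebraMap R C) := by
    intro w hw
    induction hw using Submodule.mul_induction_on' with
    | mem_mul_mem a ha c hc =>
      obtain ⟨y, hy, rfl⟩ := ha
      refine ⟨mul_mem (C.algebraMap_mem y) hc, ?_⟩
      exact Ideal.mul_mem_right (⟨c, hc⟩ : C) _ (Ideal.mem_map_of_mem (algebraMap R C) hy)
    | add a _ c _ ha hc =>
      obtain ⟨ha, ha'⟩ := ha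
      obtain ⟨hc, hc'⟩ := hc
      exact ⟨add_mem ha hc, add_mem ha' hc'⟩
  obtain ⟨hαC, hαI⟩ := key α h2
  refine ⟨C, hC, ⟨α, hαC⟩, hα, le_antisymm ?_ ?_⟩
  · rw [← hT, Ideal.map_span, Ideal.span_le]
    rintro _ ⟨y, hy, rfl⟩
    obtain ⟨s, hs, e⟩ := h1 y hy
    exact Ideal.mem_span_singleton.2 ⟨⟨s, hs⟩, Subtype.ext e⟩
  · rw [Ideal.span_singleton_le_iff_mem]; exact hαI

end

section
open scoped TensorProduct
set_option linter.style.haveILetI false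

theorem eps_key {R C Θ : Type*} [CommRing R] [CommRing C] [CommRing Θ] [Algebra R C] [Algebra R Θ]
    {I : Ideal R} {α : C} (hI : I.map (algebraMap R C) = Ideal.span {α}) {b : R} {t g d : C} {n : ℕ} {a : R}
    (ha : algebraMap R C a = α * t) (hn : t ^ n * (1 - t ^ n * g) = algebraMap R C b * d)
    (f₁ f₂ : C →ₐ[R] Θ) {y : R} (hy : y ∈ I) :
    algebraMap R Θ b ∣ algebraMap R Θ y * (f₁ (t ^ n * g) * (1 - f₂ (t ^ n * g))) := by
  have hdvd : ∀ y ∈ I, α ∣ algebraMap R C y := fun y hy =>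
    Ideal.mem_span_singleton.1 (hI ▸ Ideal.mem_map_of_mem (algebraMap R C) hy)
  have h1 : f₁ α ∣ f₂ α := by
    have hle : I.map (algebraMap R C) ≤ (Ideal.span {f₁ α}).comap f₂.toRingHom := by
      rw [Ideal.map_le_iff_le_comap]
      intro z hz
      rw [Ideal.mem_comap, Ideal.mem_comap, Ideal.mem_span_singleton]
      change _ ∣ f₂ (algebraMap R C z)
      rw [AlgHom.commutes, ← AlgHom.commutes f₁]
      exact map_dvd f₁ (hdvd z hz)
    have hα : α ∈ I.map (algebraMap R C) := hI ▸ Ideal.mem_span_singleton_self α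
    exact Ideal.mem_span_singleton.1 (hle hα)
  obtain ⟨θ, hθ⟩ := h1
  have h2 : f₁ α * f₁ t = f₁ α * (θ * f₂ t) := by
    rw [← map_mul, ← ha, AlgHom.commutes, ← mul_assoc, ← hθ, ← map_mul, ← ha, AlgHom.commutes]
  have h3 : ∀ k, f₁ α * f₁ t ^ k = f₁ α * (θ * f₂ t) ^ k := by
    intro k
    induction k with
    | zero => simp
    | succ k ih => rw [pow_succ, ← mul_assoc, ih, pow_succ, ← mul_assoc, mul_right_comm, h2]; ring
  obtain ⟨s, hs⟩ := hdvd y hy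
  have h4 : f₂ t ^ n * (1 - f₂ (t ^ n * g)) = algebraMap R Θ b * f₂ d := by
    have := congrArg f₂ hn
    rwa [map_mul, map_sub, map_one, map_pow, map_mul f₂ (algebraMap R C b), AlgHom.commutes] at this
  refine ⟨f₁ α * f₁ s * θ ^ n * f₁ g * f₂ d, ?_⟩
  have h5 : algebraMap R Θ y = f₁ α * f₁ s := by rw [← map_mul, ← hs, AlgHom.commutes]
  calc algebraMap R Θ y * (f₁ (t ^ n * g) * (1 - f₂ (t ^ n * g)))
      = (f₁ α * f₁ t ^ n) * f₁ s * f₁ g * (1 - f₂ (t ^ n * g)) := by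
        rw [h5, map_mul f₁, map_pow]; ring
    _ = f₁ α * f₁ s * θ ^ n * f₁ g * (f₂ t ^ n * (1 - f₂ (t ^ n * g))) := by rw [h3]; ring
    _ = _ := by rw [h4]; ring

theorem tensor_eps {R C : Type*} [CommRing R] [CommRing C] [Algebra R C]
    {I : Ideal R} {α : C} (hI : I.map (algebraMap R C) = Ideal.span {α}) {b : R}
    (hb : ∀ d : C, ∃ r, algebraMap R C r = algebraMap R C b * d) {t g d : C} {n : ℕ} {a : R}
    (ha : algebraMap R C a = α * t) (hn : t ^ n * (1 - t ^ n * g) = algebraMap R C b * d)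
    {y : R} (hy : y ∈ I) :
    (algebraMap R C y * (t ^ n * g)) ⊗ₜ[R] (1 : C) = 1 ⊗ₜ[R] (algebraMap R C y * (t ^ n * g)) := by
  let f₁ : C →ₐ[R] C ⊗[R] C := Algebra.TensorProduct.includeLeft
  let f₂ : C →ₐ[R] C ⊗[R] C := Algebra.TensorProduct.includeRight
  have h1 := eps_key hI ha hn f₁ f₂ hy
  have h2 := eps_key hI ha hn f₂ f₁ hy
  have h3 := dvd_sub h1 h2
  have hr : ∀ ω : C ⊗[R] C, ∃ r, algebraMap R (C ⊗[R] C) b * ω = algebraMap R _ r := by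
    intro ω
    induction ω using TensorProduct.induction_on with
    | zero => exact ⟨0, by rw [mul_zero, map_zero]⟩
    | add x z hx hz =>
      obtain ⟨r, hr⟩ := hx
      obtain ⟨r', hr'⟩ := hz
      exact ⟨r + r', by rw [mul_add, hr, hr', map_add]⟩
    | tmul c d =>
      obtain ⟨r1, e1⟩ := hb c
      obtain ⟨r2, e2⟩ := hb (c * d)
      refine ⟨r2, ?_⟩
      have : c ⊗ₜ[R] d = f₁ c * f₂ d := by simp [f₁, f₂]
      rw [this, ← AlgHom.commutes f₁, ← mul_assoc, ← map_mul, ← e1, AlgHom.commutes, ← AlgHom.commutes f₂, ← map_mul, e1,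
        mul_assoc, ← e2, AlgHom.commutes]
  obtain ⟨ω, hω⟩ := h3
  obtain ⟨r, hr⟩ := hr ω
  rw [hr] at hω
  have hz : algebraMap R (C ⊗[R] C) y * (f₁ (t ^ n * g) - f₂ (t ^ n * g)) = algebraMap R _ r := by
    rw [← hω]; ring
  have hr0 : algebraMap R C r = 0 := by
    have := congrArg (Algebra.TensorProduct.lmul' (S := C) R) hz
    rw [map_mul, map_sub, AlgHom.commutes, AlgHom.commutes] at this
    rw [← this]
    simp [f₁, f₂]
  rw [← AlgHom.commutes f₁ r, hr0, map_zero, mul_sub, sub_eq_zero] at hz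
  have e1 : (algebraMap R C y * (t ^ n * g)) ⊗ₜ[R] (1 : C) = f₁ (algebraMap R C y * (t ^ n * g)) := rfl
  have e2 : 1 ⊗ₜ[R] (algebraMap R C y * (t ^ n * g)) = f₂ (algebraMap R C y * (t ^ n * g)) := rfl
  rw [e1, e2, map_mul f₁ (algebraMap R C y), map_mul f₂ (algebraMap R C y), AlgHom.commutes, AlgHom.commutes, hz]

end

section
set_option linter.style.haveILetI false

theorem idemD0 {D : Type*} [CommRing D] {T g E : D} {n : ℕ} (hE : E = T ^ n * g) (hz : T ^ n * (1 - E) = 0) :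
    E * (1 - E) = 0 := by
  calc E * (1 - E) = g * (T ^ n * (1 - E)) := by rw [← mul_assoc, mul_comm g, ← hE]
    _ = 0 := by rw [hz, mul_zero]

theorem idemD1 {D : Type*} [CommRing D] {T T' g E E' s : D} {n n' : ℕ} (hn : 0 < n) (hE : E = T ^ n * g)
    (hz : T ^ n * (1 - E) = 0) (hT : T' = T * E + s * (1 - E)) (hz' : T' ^ n' * (1 - E') = 0) :
    E * (1 - E') = 0 := by
  have h0 := idemD0 hE hz
  have h2 : E * E = E := by linear_combination -h0
  have h3 : ∀ k, E * T' ^ k = E * T ^ k := by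
    intro k
    induction k with
    | zero => simp
    | succ k ih =>
      have : E * T' = E * T := by rw [hT]; linear_combination (s - T) * h0
      calc E * T' ^ (k + 1) = (E * T' ^ k) * T' := by ring
        _ = (E * T') * T ^ k := by rw [ih]; ring
        _ = _ := by rw [this]; ring
  have h4 : ∀ k, E * E ^ k = E := by
    intro k
    induction k with
    | zero => simp
    | succ k ih => rw [pow_succ, ← mul_assoc, ih, h2]
  have h5 : E * T ^ n' * (1 - E') = 0 := by rw [← h3, mul_assoc, hz', mul_zero]
  obtain ⟨m, rfl⟩ : ∃ m, n = m + 1 := ⟨n - 1, by omega⟩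
  calc E * (1 - E') = (E * E ^ n') * (1 - E') := by rw [h4]
    _ = (E * (T ^ (m + 1) * g) ^ n') * (1 - E') := by rw [← hE]
    _ = (T ^ m * g) ^ n' * (E * T ^ n' * (1 - E')) := by
      rw [show T ^ (m + 1) * g = T * (T ^ m * g) by ring, mul_pow]; ring
    _ = 0 := by rw [h5, mul_zero]

theorem idemD2 {D : Type*} [CommRing D] {T T' g E E' s : D} {n n' : ℕ} (hE : E = T ^ n * g)
    (hz : T ^ n * (1 - E) = 0) (hT : T' = T * E + s * (1 - E)) (hz' : T' ^ n' * (1 - E') = 0)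
    (h : E' * (1 - E) = 0) : s ^ n' * (1 - E) = 0 := by
  have h0 := idemD0 hE hz
  have h3 : ∀ k, T' ^ k * (1 - E) = s ^ k * (1 - E) := by
    intro k
    induction k with
    | zero => simp
    | succ k ih =>
      have : T' * (1 - E) = s * (1 - E) := by rw [hT]; linear_combination (T - s) * h0
      calc T' ^ (k + 1) * (1 - E) = (T' ^ k * (1 - E)) * T' := by ring
        _ = (T' * (1 - E)) * s ^ k := by rw [ih]; ring
        _ = _ := by rw [this]; ring
  rw [← h3]
  linear_combination (1 - E) * hz' + T' ^ n' * h

theorem exists_unit_gen {R C : Type*} [CommRing R] [IsLocalRing R] [CommRing C] [IsNoetherianRing C] [Algebra R C]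
    {I : Ideal R} {α : C} (hα : α ∈ nonZeroDivisors C) (hI : I.map (algebraMap R C) = Ideal.span {α}) {b : R}
    (hb : ∀ d : C, ∃ r ∈ IsLocalRing.maximalIdeal R, algebraMap R C r = algebraMap R C b * d)
    (hidem : ∀ t : C, ∃ (n : ℕ) (g d : C), 0 < n ∧ t ^ n * (1 - t ^ n * g) = algebraMap R C b * d)
    (heps : ∀ (a : R) (t g d : C) (n : ℕ), algebraMap R C a = α * t →
      t ^ n * (1 - t ^ n * g) = algebraMap R C b * d → ∀ y ∈ I, ∃ u ∈ I, algebraMap R C u = algebraMap R C y * (t ^ n * g)) :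
    ∃ a ∈ I, ∃ t : C, IsUnit t ∧ algebraMap R C a = α * t := by
  let B : Ideal C := Ideal.span {algebraMap R C b}
  let π : C →+* C ⧸ B := Ideal.Quotient.mk B
  have hπ : ∀ z, π z = 0 ↔ ∃ d, z = algebraMap R C b * d := fun z => by
    rw [Ideal.Quotient.eq_zero_iff_mem, Ideal.mem_span_singleton]; rfl
  let P : Ideal C → Prop := fun J => ∃ a ∈ I, ∃ (t : C) (n : ℕ) (g d : C), algebraMap R C a = α * t ∧ 0 < n ∧
    t ^ n * (1 - t ^ n * g) = algebraMap R C b * d ∧ J = Ideal.span {t ^ n * g} ⊔ B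
  have hne : ({J | P J} : Set (Ideal C)).Nonempty := by
    obtain ⟨n, g, d, hn, e⟩ := hidem 0
    exact ⟨_, 0, zero_mem _, 0, n, g, d, by simp, hn, e, rfl⟩
  obtain ⟨J, ⟨a, ha, t, n, g, d, hat, hn, e, hJ⟩, hmax⟩ := set_has_maximal_iff_noetherian.2 (inferInstance : IsNoetherian C C) _ hne
  obtain ⟨ε, hε⟩ : ∃ ε, ε = t ^ n * g := ⟨_, rfl⟩
  have e' : t ^ n * (1 - ε) = algebraMap R C b * d := by rw [hε]; exact e
  have z1 : π t ^ n * (1 - π ε) = 0 := by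
    rw [← map_pow, ← map_one π, ← map_sub, ← map_mul, hπ]; exact ⟨d, e'⟩
  have z0 : π ε = π t ^ n * π g := by rw [hε, map_mul, map_pow]
  rw [← hε] at hJ
  have key : ∀ w ∈ I, ∀ s, algebraMap R C w = α * s → ∃ N, π (s ^ N * (1 - ε)) = 0 := by
    intro w hw s hs
    obtain ⟨ua, hua, eua⟩ := heps a t g d n hat e a ha
    obtain ⟨uw, huw, euw⟩ := heps a t g d n hat e w hw
    rw [← hε] at eua euw
    obtain ⟨t', ht'⟩ : ∃ t', t' = t * ε + s * (1 - ε) := ⟨_, rfl⟩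
    obtain ⟨n', g', d', hn', ee⟩ := hidem t'
    obtain ⟨ε', hε'⟩ : ∃ ε, ε = t' ^ n' * g' := ⟨_, rfl⟩
    have z1' : π t' ^ n' * (1 - π ε') = 0 := by
      rw [← map_pow, ← map_one π, ← map_sub, ← map_mul, hπ, hε']; exact ⟨d', ee⟩
    have hT : π t' = π t * π ε + π s * (1 - π ε) := by
      rw [ht', map_add, map_mul, map_mul, map_sub, map_one]
    have h1 := idemD1 hn z0 z1 hT z1'
    have hle : J ≤ Ideal.span {ε'} ⊔ B := by
      rw [hJ]
      refine sup_le ?_ le_sup_right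
      rw [Ideal.span_singleton_le_iff_mem]
      rw [← map_one π, ← map_sub, ← map_mul, Ideal.Quotient.eq_zero_iff_mem] at h1
      have : ε = ε' * ε + ε * (1 - ε') := by ring
      rw [this]
      exact add_mem (Ideal.mem_sup_left (Ideal.mul_mem_right _ _ (Ideal.mem_span_singleton_self _))) (Ideal.mem_sup_right h1)
    have hP : P (Ideal.span {ε'} ⊔ B) := by
      refine ⟨ua + w - uw, sub_mem (add_mem hua hw) huw, t', n', g', d', ?_, hn', ee, by rw [hε']⟩
      rw [map_sub, map_add, eua, euw, hat, hs, ht']; ring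
    have heq : Ideal.span {ε'} ⊔ B = J := by
      by_contra hne
      exact hmax _ hP (lt_of_le_of_ne hle (Ne.symm hne))
    have hmem : ε' ∈ J := heq ▸ Ideal.mem_sup_left (Ideal.mem_span_singleton_self _)
    rw [hJ, Submodule.mem_sup] at hmem
    obtain ⟨p, hp, r, hr, hpr⟩ := hmem
    obtain ⟨c, rfl⟩ := Ideal.mem_span_singleton.1 hp
    have h2 : π ε' * (1 - π ε) = 0 := by
      have hr0 : π r = 0 := Ideal.Quotient.eq_zero_iff_mem.2 hr
      rw [← hpr, map_add, hr0, map_mul]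
      linear_combination (π c) * idemD0 z0 z1
    refine ⟨n', ?_⟩
    rw [map_mul, map_pow, map_sub, map_one]
    exact idemD2 z0 z1 hT z1' h2
  let K : Ideal C := Submodule.comap (LinearMap.mulRight C (1 - ε)) (RingHom.ker π)
  have hK : ∀ c, c ∈ K ↔ π (c * (1 - ε)) = 0 := fun c => Iff.rfl
  have hle : I.map (algebraMap R C) ≤ Ideal.span {α} * K.radical := by
    rw [Ideal.map_le_iff_le_comap]
    intro w hw
    rw [Ideal.mem_comap, Ideal.mem_span_singleton_mul]
    obtain ⟨s, hs⟩ := Ideal.mem_span_singleton.1 (hI ▸ Ideal.mem_map_of_mem (algebraMap R C) hw)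
    obtain ⟨N, hN⟩ := key w hw s hs
    exact ⟨s, ⟨N, (hK _).2 hN⟩, hs.symm⟩
  have hα1 : α ∈ Ideal.span {α} * K.radical := hle (hI ▸ Ideal.mem_span_singleton_self α)
  rw [Ideal.mem_span_singleton_mul] at hα1
  obtain ⟨k, hk, hαk⟩ := hα1
  have hk1 : k = 1 := by
    have : α * (k - 1) = 0 := by rw [mul_sub, hαk, mul_one, sub_self]
    exact sub_eq_zero.1 ((mul_left_mem_nonZeroDivisors_eq_zero_iff hα).1 this)
  rw [hk1] at hk
  obtain ⟨N, hN⟩ := hk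
  rw [one_pow, hK, one_mul, hπ] at hN
  obtain ⟨f, hf⟩ := hN
  refine ⟨a, ha, t, ?_, hat⟩
  obtain ⟨m, rfl⟩ : ∃ m, n = m + 1 := ⟨n - 1, by omega⟩
  refine isUnit_of_mod hb (y := t ^ m * g) (d := f) ?_
  rw [← hf, hε]; ring

end

section
open scoped TensorProduct
set_option linter.style.haveILetI false

theorem mem_of_tensor {R : Type*} [CommRing R] (h : IsStrictlyClosed R) (C : Subalgebra R (FractionRing R))
    (hC : ∀ c : C, IsIntegral R (c : FractionRing R)) (c : C) (hc : c ⊗ₜ[R] (1 : C) = 1 ⊗ₜ[R] c) :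
    ∃ u : R, algebraMap R C u = c := by
  have hle : C ≤ integralClosure R (FractionRing R) := fun z hz => hC ⟨z, hz⟩
  obtain ⟨u, hu⟩ := h (c : FractionRing R) ⟨hle c.2, by
    have := congrArg (TensorProduct.map (Subalgebra.inclusion hle).toLinearMap (Subalgebra.inclusion hle).toLinearMap) hc
    rw [TensorProduct.map_tmul, TensorProduct.map_tmul] at this
    exact this⟩
  exact ⟨u, Subtype.ext hu⟩

theorem arf_of_strict {R : Type*} [CommRing R] [IsLocalRing R] [IsNoetherianRing R]
    (hd : ringKrullDim R = 1) (h : IsStrictlyClosed R) : IsArfRing R := by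
  have hw := weaklyArf_of_strict h
  refine ⟨?_, hw⟩
  rintro I hIc ⟨x, hxI, hx⟩
  by_cases hT : I = ⊤
  · refine ⟨0, 1, by rw [hT]; trivial, ?_⟩
    rw [hT]; simp
  have hxm : x ∈ IsLocalRing.maximalIdeal R := IsLocalRing.le_maximalIdeal hT hxI
  obtain ⟨C, hC, α, hαu, hI⟩ := exists_C hd hxI hxm hx
  obtain ⟨b, hb0, hb⟩ := exists_b C hxm hx
  haveI := art_of_dim_one hd b hb0
  haveI : IsNoetherianRing C := IsNoetherianRing.of_finite R C
  have hint : ∀ c : C, IsIntegral R (c : FractionRing R) := fun c =>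
    (Algebra.IsIntegral.isIntegral (R := R) c).map C.val
  have hα : α ∈ nonZeroDivisors C := by
    rw [mem_nonZeroDivisors_iff_right]
    intro z hz
    apply Subtype.ext
    exact (hαu.mul_left_eq_zero).1 (congrArg Subtype.val hz)
  obtain ⟨a, ha, t, ht, hat⟩ := exists_unit_gen hα hI hb (idem_mod b) (by
    intro a t g d n hat e y hy
    have h1 := tensor_eps hI (fun d => (hb d).imp fun r hr => hr.2) hat e hy
    obtain ⟨u, hu⟩ := mem_of_tensor h C hint _ h1
    refine ⟨u, ?_, hu⟩
    have : u ∈ idealIntegralClosure I := memIC_of_integral hy (hint (t ^ n * g)) (congrArg Subtype.val hu)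
    rw [hIc] at this
    exact this)
  have hat' : algebraMap R (FractionRing R) a = α * t := congrArg Subtype.val hat
  have hau : IsUnit (algebraMap R (FractionRing R) a) := by
    rw [hat']; exact hαu.mul (ht.map C.val)
  have ha0 := nzd_of_isUnit_map hau
  have key := weaklyArf_key hw hIc ha ha0 (by
    intro y hy
    obtain ⟨s, hs⟩ := Ideal.mem_span_singleton.1 (hI ▸ Ideal.mem_map_of_mem (algebraMap R C) hy)
    obtain ⟨t', ht'⟩ := ht.exists_right_inv
    have e : IsLocalization.mk' (FractionRing R) y (⟨a, ha0⟩ : nonZeroDivisors R) = ((s * t' : C) : FractionRing R) := by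
      apply hau.mul_left_cancel
      have e1 := IsLocalization.mk'_spec' (FractionRing R) y (⟨a, ha0⟩ : nonZeroDivisors R)
      refine e1.trans ?_
      have : algebraMap R C y = algebraMap R C a * (s * t') := by
        rw [hat, hs]; linear_combination (- α * s) * ht'
      exact congrArg Subtype.val this
    rw [e]; exact hint _)
  refine ⟨1, a, ha, ?_⟩
  rw [pow_one, pow_two]
  apply le_antisymm
  · rw [Ideal.mul_le]
    intro y hy z hz
    obtain ⟨u, hu, e⟩ := key y hy z hz
    exact Ideal.mem_span_singleton_mul.2 ⟨u, hu, e.symm⟩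
  · exact mul_le_mul' ((Ideal.span_singleton_le_iff_mem I).2 ha) le_rfl

end

/-- For a Noetherian ring `A` satisfying `(S₂)`: `A` is strictly closed in `Ā` iff `A`
is weakly Arf and `A_P` is an Arf ring for every prime `P` of height `1`. -/
theorem strictlyClosed_iff_weaklyArf_and_arf_in_ht_one (A : Type*) [CommRing A]
    [IsNoetherianRing A] (hS2 : SerreSCondition A 2) :
    IsStrictlyClosed A ↔
      (IsWeaklyArfRing A ∧
        ∀ (P : Ideal A) [P.IsPrime],
          ringKrullDim (Localization.AtPrime P) = 1 →
          IsArfRing (Localization.AtPrime P)) := by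
  constructor
  · intro h
    exact ⟨weaklyArf_of_strict h, fun P _ hd => arf_of_strict hd (strict_localize hS2 h P)⟩
  · rintro ⟨-, harf⟩
    exact strict_of_local A hS2 (fun P _ hd => arf_strict (art_of_dim_one hd) (harf P hd))
end

section
/- Let A be a commutative ring, let B = A[X] be the polynomial ring in one variable, and suppose that the integral closure of B in Q(B) is contained in Q(A)[X] (this holds, for example, when A is an integral domain). Then B* = (A*)[X]. Consequently, B is strictly closed in its integral closure if and only if A is strictly closed in Ā. -/
open scoped TensorProduct

/-- Elements of the integral closure on which any two ring maps agreeing on `A` agree. -/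
def SCE (A K : Type*) [CommRing A] [CommRing K] [Algebra A K] (x : K) : Prop :=
  ∃ hx : x ∈ integralClosure A K,
    ((⟨x, hx⟩ : integralClosure A K) ⊗ₜ[A] (1 : integralClosure A K) :
      TensorProduct A (integralClosure A K) (integralClosure A K)) =
    (1 : integralClosure A K) ⊗ₜ[A] (⟨x, hx⟩ : integralClosure A K)

lemma mem_strictClosureSet_iff (A : Type*) [CommRing A] (x : FractionRing A) :
    x ∈ strictClosureSet A ↔ SCE A (FractionRing A) x := Iff.rfl

lemma eq_of_tmul {R S T : Type*} [CommRing R] [CommRing S] [CommRing T] [Algebra R S]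
    (x : S) (h : (x ⊗ₜ[R] (1 : S) : S ⊗[R] S) = 1 ⊗ₜ[R] x) (f g : S →+* T)
    (hfg : ∀ a, f (algebraMap R S a) = g (algebraMap R S a)) : f x = g x := by
  letI : Algebra R T := (f.comp (algebraMap R S)).toAlgebra
  let f' : S →ₐ[R] T := { f with commutes' := fun a => rfl }
  let g' : S →ₐ[R] T := { g with commutes' := fun a => (hfg a).symm }
  have := congrArg (Algebra.TensorProduct.lift f' g' (fun _ _ => Commute.all _ _)) h
  rw [Algebra.TensorProduct.lift_tmul, Algebra.TensorProduct.lift_tmul] at this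
  rw [map_one, map_one, mul_one, one_mul] at this
  exact this

section
variable {A K L : Type*} [CommRing A] [CommRing K] [CommRing L] [Algebra A K]
  [Algebra (Polynomial A) L] [IsFractionRing A K] [IsFractionRing (Polynomial A) L]

open Polynomial nonZeroDivisors

lemma C_mem_nzd {t : A} (ht : t ∈ A⁰) : (C t : A[X]) ∈ A[X]⁰ :=
  mem_nonZeroDivisors_of_leadingCoeff (by simpa using ht)

variable (A K L) in
/-- `Q(A) → Q(A[X])`. -/
noncomputable def psiMap : K →+* L :=
  IsLocalization.lift (M := A⁰) (g := (algebraMap A[X] L).comp C)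
    (fun y => IsLocalization.map_units L (⟨C y.1, C_mem_nzd y.2⟩ : A[X]⁰))

@[simp] lemma psiMap_algebraMap (a : A) :
    psiMap A K L (algebraMap A K a) = algebraMap A[X] L (C a) := by
  simp [psiMap]

variable (A K L) in
/-- `Q(A)[X] → Q(A[X])`. -/
noncomputable def phiMap : K[X] →+* L := eval₂RingHom (psiMap A K L) (algebraMap A[X] L X)

lemma phiMap_map (q : A[X]) : phiMap A K L (q.map (algebraMap A K)) = algebraMap A[X] L q := by
  have : (phiMap A K L).comp (mapRingHom (algebraMap A K)) = algebraMap A[X] L := by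
    ext <;> simp [phiMap]
  exact congrArg (fun f => f q) this

lemma phiMap_injective : Function.Injective (phiMap A K L) := by
  letI := Polynomial.algebra A K
  haveI : IsLocalization (A⁰.map C) K[X] := Polynomial.isLocalization A⁰ K
  rw [injective_iff_map_eq_zero]
  intro p hp
  obtain ⟨⟨q, s⟩, h⟩ := IsLocalization.surj (A⁰.map (C : A →+* A[X])) p
  have h2 := congrArg (phiMap A K L) h
  rw [map_mul, hp, zero_mul] at h2
  simp only [Polynomial.algebraMap_def, coe_mapRingHom, phiMap_map] at h2
  have hq : q = 0 := (IsFractionRing.injective A[X] L) (by rw [← h2, map_zero])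
  subst hq
  rw [map_zero] at h
  exact (IsLocalization.map_units K[X] s).mul_left_eq_zero.mp h

variable (A K L) in
/-- `Ā[X] → Q(A[X])`. -/
noncomputable def thetaMap : (integralClosure A K)[X] →+* L :=
  (phiMap A K L).comp (mapRingHom (algebraMap (integralClosure A K) K))

lemma thetaMap_injective : Function.Injective (thetaMap A K L) := by
  rw [thetaMap, RingHom.coe_comp]
  exact phiMap_injective.comp (map_injective _ Subtype.val_injective)

lemma thetaMap_map (q : A[X]) :
    thetaMap A K L (q.map (algebraMap A (integralClosure A K))) = algebraMap A[X] L q := by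
  rw [← phiMap_map (K := K), thetaMap, RingHom.comp_apply, coe_mapRingHom, Polynomial.map_map]
  rfl

lemma isIntegral_phiMap {p : K[X]} :
    IsIntegral A[X] (phiMap A K L p) ↔ ∀ n, IsIntegral A (p.coeff n) := by
  letI := Polynomial.algebra A K
  rw [← Polynomial.isIntegral_iff_isIntegral_coeff]
  let F : K[X] →ₐ[A[X]] L := { phiMap A K L with commutes' := fun a => phiMap_map a }
  exact isIntegral_algHom_iff F phiMap_injective

lemma isIntegral_thetaMap (p : (integralClosure A K)[X]) :
    thetaMap A K L p ∈ integralClosure A[X] L := by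
  refine isIntegral_phiMap.2 fun n => ?_
  rw [coe_mapRingHom, coeff_map]
  exact (p.coeff n).2

/-- if the quotient `q / t` has integral coefficients, it comes from `Ā[X]`. -/
lemma exists_theta (q : A[X]) (t : A) (ht : t ∈ A⁰) (ξ : L)
    (h : ξ * algebraMap A[X] L (C t) = algebraMap A[X] L q) :
    ∃ p : K[X], phiMap A K L p = ξ ∧
      ∀ i, p.coeff i = IsLocalization.mk' K (q.coeff i) (⟨t, ht⟩ : A⁰) := by
  have hu : IsUnit (algebraMap A[X] L (C t)) :=
    IsLocalization.map_units L (⟨C t, C_mem_nzd ht⟩ : A[X]⁰)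
  refine ⟨q.map (algebraMap A K) * C (IsLocalization.mk' K 1 (⟨t, ht⟩ : A⁰)), ?_, ?_⟩
  · apply hu.mul_left_injective
    change _ * _ = _ * _
    rw [h, ← phiMap_map (K := K) (C t), ← map_mul, mul_assoc, Polynomial.map_C, ← C_mul,
      IsLocalization.mk'_spec_mk, map_one, C_1, mul_one, phiMap_map]
  · intro i
    rw [coeff_mul_C, coeff_map, ← IsLocalization.mk'_eq_mul_mk'_one]

lemma lift_theta {p : K[X]} (h : ∀ i, p.coeff i ∈ integralClosure A K) :
    ∃ P : (integralClosure A K)[X], P.map (algebraMap (integralClosure A K) K) = p := by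
  have : p ∈ Polynomial.lifts (algebraMap (integralClosure A K) K) := by
    rw [Polynomial.lifts_iff_coeff_lifts]
    intro n
    exact ⟨⟨_, h n⟩, rfl⟩
  exact (Polynomial.mem_lifts _).1 this

theorem main_iff (hyp : ∀ ξ : L, ξ ∈ integralClosure A[X] L →
      ∃ (q : A[X]) (t : A), t ∈ A⁰ ∧ ξ * algebraMap A[X] L (C t) = algebraMap A[X] L q) (ξ : L) :
    SCE A[X] L ξ ↔ ∃ (q : A[X]) (t : A) (ht : t ∈ A⁰),
      (∀ i : ℕ, SCE A K (IsLocalization.mk' K (q.coeff i) (⟨t, ht⟩ : A⁰))) ∧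
      ξ * algebraMap A[X] L (C t) = algebraMap A[X] L q := by
  constructor
  · rintro ⟨hξ, hx⟩
    obtain ⟨q, t, ht, hq⟩ := hyp ξ hξ
    refine ⟨q, t, ht, ?_, hq⟩
    obtain ⟨p, hp, hpc⟩ := exists_theta (K := K) q t ht ξ hq
    have hpi : ∀ i, p.coeff i ∈ integralClosure A K := isIntegral_phiMap.1 (hp ▸ hξ)
    intro i
    rw [← hpc]
    refine ⟨hpi i, ?_⟩
    obtain ⟨P, hP⟩ := lift_theta hpi
    have hθP : thetaMap A K L P = ξ := by
      rw [thetaMap, RingHom.comp_apply, coe_mapRingHom, hP, hp]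
    let Θ : (integralClosure A K)[X] →+* integralClosure A[X] L :=
      (thetaMap A K L).codRestrict (integralClosure A[X] L) isIntegral_thetaMap
    have hΘ : Function.Bijective Θ := by
      constructor
      · intro a b hab
        exact thetaMap_injective (congrArg Subtype.val hab)
      · rintro ⟨η, hη⟩
        obtain ⟨q', t', ht', hq'⟩ := hyp η hη
        obtain ⟨p', hp', -⟩ := exists_theta (K := K) q' t' ht' η hq'
        obtain ⟨P', hP'⟩ := lift_theta (A := A) (p := p') (isIntegral_phiMap.1 (hp' ▸ hη))
        refine ⟨P', Subtype.ext ?_⟩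
        change thetaMap A K L P' = η
        rw [thetaMap, RingHom.comp_apply, coe_mapRingHom, hP', hp']
    let e := RingEquiv.ofBijective Θ hΘ
    have he : ∀ Q, e.symm (Θ Q) = Q := fun Q => e.symm_apply_apply Q
    let T := (integralClosure A K) ⊗[A] (integralClosure A K)
    let f : (integralClosure A K) →+* T :=
      (Algebra.TensorProduct.includeLeft : (integralClosure A K) →ₐ[A] T)
    let g : (integralClosure A K) →+* T :=
      (Algebra.TensorProduct.includeRight : (integralClosure A K) →ₐ[A] T)
    have hfgc : f.comp (algebraMap A _) = g.comp (algebraMap A _) := by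
      ext a
      exact (AlgHom.commutes (Algebra.TensorProduct.includeLeft : _ →ₐ[A] T) a).trans
        (AlgHom.commutes (Algebra.TensorProduct.includeRight : _ →ₐ[A] T) a).symm
    have hag : ∀ a, ((mapRingHom f).comp e.symm.toRingHom) (algebraMap A[X] _ a) =
        ((mapRingHom g).comp e.symm.toRingHom) (algebraMap A[X] _ a) := by
        intro a
        have : algebraMap A[X] (integralClosure A[X] L) a = Θ (a.map (algebraMap A _)) :=
          Subtype.ext (thetaMap_map a).symm
        rw [this]
        change (e.symm (Θ _)).map f = (e.symm (Θ _)).map g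
        rw [he, Polynomial.map_map, Polynomial.map_map, hfgc]
    have key := eq_of_tmul (T := T[X]) _ hx ((mapRingHom f).comp e.symm.toRingHom)
      ((mapRingHom g).comp e.symm.toRingHom) hag
    have hξΘ : (⟨ξ, hξ⟩ : integralClosure A[X] L) = Θ P := Subtype.ext hθP.symm
    rw [hξΘ] at key
    change (e.symm (Θ _)).map f = (e.symm (Θ _)).map g at key
    rw [he] at key
    have k2 := congrArg (fun Q => Q.coeff i) key
    simp only [coeff_map] at k2
    have hPi : P.coeff i = ⟨p.coeff i, hpi i⟩ := by
      apply Subtype.ext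
      change algebraMap (integralClosure A K) K _ = _
      rw [← coeff_map, hP]
    rw [hPi] at k2
    exact k2
  · rintro ⟨q, t, ht, hc, hq⟩
    obtain ⟨p, hp, hpc⟩ := exists_theta (K := K) q t ht ξ hq
    have hpi : ∀ i, p.coeff i ∈ integralClosure A K := fun i => by
      rw [hpc]; exact (hc i).1
    have hξ : ξ ∈ integralClosure A[X] L := hp ▸ isIntegral_phiMap.2 hpi
    refine ⟨hξ, ?_⟩
    obtain ⟨P, hP⟩ := lift_theta hpi
    have hθP : thetaMap A K L P = ξ := by
      rw [thetaMap, RingHom.comp_apply, coe_mapRingHom, hP, hp]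
    let Θ : (integralClosure A K)[X] →+* integralClosure A[X] L :=
      (thetaMap A K L).codRestrict (integralClosure A[X] L) isIntegral_thetaMap
    let T := (integralClosure A[X] L) ⊗[A[X]] (integralClosure A[X] L)
    let f : (integralClosure A[X] L) →+* T :=
      (Algebra.TensorProduct.includeLeft : (integralClosure A[X] L) →ₐ[A[X]] T)
    let g : (integralClosure A[X] L) →+* T :=
      (Algebra.TensorProduct.includeRight : (integralClosure A[X] L) →ₐ[A[X]] T)
    have hfg : ∀ a, f (algebraMap A[X] _ a) = g (algebraMap A[X] _ a) := fun a =>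
      (AlgHom.commutes (Algebra.TensorProduct.includeLeft : _ →ₐ[A[X]] T) a).trans
        (AlgHom.commutes (Algebra.TensorProduct.includeRight : _ →ₐ[A[X]] T) a).symm
    have hΘa : ∀ a : A[X], Θ (a.map (algebraMap A _)) = algebraMap A[X] _ a := fun a =>
      Subtype.ext (thetaMap_map a)
    have hcoef : ∀ i, f (Θ (C (P.coeff i))) = g (Θ (C (P.coeff i))) := by
      intro i
      have hPi : P.coeff i = ⟨p.coeff i, hpi i⟩ := by
        apply Subtype.ext
        change algebraMap (integralClosure A K) K _ = _
        rw [← coeff_map, hP]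
      obtain ⟨h1, h2⟩ := (hpc i).symm ▸ hc i
      rw [hPi]
      refine eq_of_tmul (R := A) (T := T) _ h2 ((f.comp Θ).comp C) ((g.comp Θ).comp C) fun a => ?_
      have := hΘa (C a)
      rw [Polynomial.map_C] at this
      simp only [RingHom.comp_apply, this, hfg]
    have hX : f (Θ X) = g (Θ X) := by
      have := hΘa X
      rw [Polynomial.map_X] at this
      rw [this, hfg]
    have hfin : f (Θ P) = g (Θ P) := by
      rw [P.as_sum_range_C_mul_X_pow]
      simp only [map_sum, map_mul, map_pow, hcoef, hX]
    have hξΘ : (⟨ξ, hξ⟩ : integralClosure A[X] L) = Θ P := Subtype.ext hθP.symm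
    rw [hξΘ]
    exact hfin

end

/-- Suppose the integral closure of `B = A[X]` in `Q(B)` is contained in `Q(A)[X]`
(every integral `ξ ∈ Q(B)` can be written as `q / C t` with `q ∈ A[X]` and
`t ∈ W(A)`).  Then `B* = (A*)[X]`: an element `ξ ∈ Q(B)` lies in the strict closure
of `B` iff `ξ = q / C t` where all the coefficient fractions `(q.coeff i)/t ∈ Q(A)`
lie in the strict closure of `A`.  Consequently `B` is strictly closed iff `A` is. -/
theorem strictClosure_polynomial (A : Type*) [CommRing A]
    (hyp : ∀ ξ : FractionRing (Polynomial A),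
      ξ ∈ integralClosure (Polynomial A) (FractionRing (Polynomial A)) →
      ∃ (q : Polynomial A) (t : A), t ∈ nonZeroDivisors A ∧
        ξ * algebraMap (Polynomial A) (FractionRing (Polynomial A)) (Polynomial.C t) =
          algebraMap (Polynomial A) (FractionRing (Polynomial A)) q) :
    (∀ ξ : FractionRing (Polynomial A),
      ξ ∈ strictClosureSet (Polynomial A) ↔
        ∃ (q : Polynomial A) (t : A) (ht : t ∈ nonZeroDivisors A),
          (∀ i : ℕ, IsLocalization.mk' (FractionRing A) (q.coeff i)
            (⟨t, ht⟩ : nonZeroDivisors A) ∈ strictClosureSet A) ∧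
          ξ * algebraMap (Polynomial A) (FractionRing (Polynomial A)) (Polynomial.C t) =
            algebraMap (Polynomial A) (FractionRing (Polynomial A)) q) ∧
    (IsStrictlyClosed (Polynomial A) ↔ IsStrictlyClosed A) := by
  have hiff : ∀ ξ : FractionRing (Polynomial A), _ := fun ξ =>
    main_iff (A := A) (K := FractionRing A) (L := FractionRing (Polynomial A)) hyp ξ
  refine ⟨hiff, ?_, ?_⟩
  · intro hB x hx
    obtain ⟨a, ⟨t, ht⟩, rfl⟩ := IsLocalization.exists_mk'_eq (nonZeroDivisors A) x
    have hu : IsUnit (algebraMap (Polynomial A) (FractionRing (Polynomial A)) (Polynomial.C t)) :=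
      IsLocalization.map_units _
        (⟨Polynomial.C t, C_mem_nzd ht⟩ : nonZeroDivisors (Polynomial A))
    have hs := IsLocalization.mk'_spec_mk (M := nonZeroDivisors (Polynomial A))
      (FractionRing (Polynomial A)) (Polynomial.C a) (Polynomial.C t) (C_mem_nzd ht)
    have hcs : ∀ i, SCE A (FractionRing A) (IsLocalization.mk' (FractionRing A)
        ((Polynomial.C a).coeff i) (⟨t, ht⟩ : nonZeroDivisors A)) := by
      intro i
      by_cases hi : i = 0
      · subst hi
        rw [Polynomial.coeff_C_zero]
        exact hx
      · rw [Polynomial.coeff_C_ne_zero hi, IsLocalization.mk'_zero]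
        refine ⟨zero_mem _, ?_⟩
        exact (TensorProduct.zero_tmul _ _).trans (TensorProduct.tmul_zero _ _).symm
    obtain ⟨p, hp⟩ := hB _ ((hiff _).2 ⟨Polynomial.C a, t, ht, hcs, hs⟩)
    rw [← hp, ← map_mul] at hs
    have h1 := IsFractionRing.injective (Polynomial A) (FractionRing (Polynomial A)) hs
    have h2 := congrArg (fun q => Polynomial.coeff q 0) h1
    simp only [Polynomial.coeff_mul_C, Polynomial.coeff_C_zero] at h2
    refine ⟨p.coeff 0, ?_⟩
    rw [eq_comm, IsLocalization.mk'_eq_iff_eq_mul, ← map_mul, h2]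
  · intro hA ξ hξ
    obtain ⟨q, t, ht, hc, hq⟩ := (hiff ξ).1 hξ
    have hu : IsUnit (algebraMap (Polynomial A) (FractionRing (Polynomial A)) (Polynomial.C t)) :=
      IsLocalization.map_units _
        (⟨Polynomial.C t, C_mem_nzd ht⟩ : nonZeroDivisors (Polynomial A))
    have hd : Polynomial.C t ∣ q := by
      rw [Polynomial.C_dvd_iff_dvd_coeff]
      intro i
      obtain ⟨b, hb⟩ := hA _ (hc i)
      rw [eq_comm, IsLocalization.mk'_eq_iff_eq_mul, ← map_mul] at hb
      exact ⟨b, (IsFractionRing.injective A (FractionRing A) hb).trans (mul_comm _ _)⟩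
    obtain ⟨p, rfl⟩ := hd
    refine ⟨p, ?_⟩
    rw [mul_comm, map_mul] at hq
    exact (hu.mul_left_cancel hq).symm
end
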